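/- arXiv:math/0012191 — 6 statements merged into one kernel-verified Lean document; each statement's English description precedes it below -/
import Mathlib

section
/- With the convention φ₊^{(−1)} = ψ₊^{(−1)} = φ₋^{(−1)} = ψ₋^{(−1)} = 0, the following hold for all n ∈ ℤ. If α ∉ ℤ then for every integer i ≥ 0, and if α ∈ ℤ then for every 0 ≤ i ≤ |α|−1: (L_{α,β;ε} φ₊^{(i)})(n) − φ₊^{(i)}(n) = φ₊^{(i−1)}(n) and (L_{α,β;ε} ψ₊^{(i)})(n) − ψ₊^{(i)}(n) = ψ₊^{(i−1)}(n). If β ∉ ℤ then for every integer i ≥ 0, and if β ∈ ℤ then for every 0 ≤ i ≤ |β|−1: (L_{α,β;ε} φ₋^{(i)})(n) + φ₋^{(i)}(n) = φ₋^{(i−1)}(n) and (L_{α,β;ε} ψ₋^{(i)})(n) + ψ₋^{(i)}(n) = ψ₋^{(i−1)}(n). -/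
/-- Pochhammer symbol `(a)_n` for complex `a` and integer `n`. -/
noncomputable def poch (a : ℂ) (n : ℤ) : ℂ :=
  if 0 ≤ n then ∏ j ∈ Finset.range n.toNat, (a + (j : ℂ))
  else (∏ j ∈ Finset.range (-n).toNat, (a + (n : ℂ) + (j : ℂ)))⁻¹

/-- Gauss hypergeometric series `F(a,b;c;x)`. -/
noncomputable def hypF (a b c x : ℂ) : ℂ :=
  ∑' j : ℕ, (poch a (j : ℤ) * poch b (j : ℤ)) / ((j.factorial : ℂ) * poch c (j : ℤ)) * x ^ j

/-- The Jacobi difference operator `L_{α,β;ε}`. -/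
noncomputable def jacobiL (α β ε : ℂ) (f : ℤ → ℂ) (n : ℤ) : ℂ :=
  (2 * ((n : ℂ) + ε + 1) * ((n : ℂ) + ε + α + β + 1) /
      ((2 * (n : ℂ) + 2 * ε + α + β + 1) * (2 * (n : ℂ) + 2 * ε + α + β + 2))) * f (n + 1)
  + ((β ^ 2 - α ^ 2) /
      ((2 * (n : ℂ) + 2 * ε + α + β) * (2 * (n : ℂ) + 2 * ε + α + β + 2))) * f n
  + (2 * ((n : ℂ) + ε + α) * ((n : ℂ) + ε + β) /
      ((2 * (n : ℂ) + 2 * ε + α + β) * (2 * (n : ℂ) + 2 * ε + α + β + 1))) * f (n - 1)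

/-- The eigenvalue `λ_ε(n) = (n+ε)(n+ε+α+β+1)`. -/
noncomputable def lamE (α β ε : ℂ) (n : ℤ) : ℂ := ((n : ℂ) + ε) * ((n : ℂ) + ε + α + β + 1)

/-- The function `p^{α,β}_ε(n,z)` (case `α ∉ ℤ_{<0}`). -/
noncomputable def pStd (α β ε : ℂ) (n : ℤ) (z : ℂ) : ℂ :=
  (poch (ε + α + 1) n / poch (ε + 1) n) *
    hypF (-((n : ℂ) + ε)) ((n : ℂ) + ε + α + β + 1) (α + 1) ((1 - z) / 2)

/-- None of `ε, ε+α, ε+β, ε+α+β, 2ε+α+β` is an integer. -/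
def GoodParams (α β ε : ℂ) : Prop :=
  ∀ m : ℤ, ε ≠ (m : ℂ) ∧ ε + α ≠ (m : ℂ) ∧ ε + β ≠ (m : ℂ) ∧
    ε + α + β ≠ (m : ℂ) ∧ 2 * ε + α + β ≠ (m : ℂ)

/-- `φ₊^{(i)}(n)`. -/
noncomputable def phiPd (α β ε : ℂ) (i : ℕ) (n : ℤ) : ℂ :=
  (poch (ε + α + 1) n / poch (ε + 1) n) *
    (poch (-((n : ℂ) + ε)) (i : ℤ) * poch ((n : ℂ) + ε + α + β + 1) (i : ℤ)) /
      ((-2 : ℂ) ^ i * (i.factorial : ℂ) * poch (α + 1) (i : ℤ))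

/-- `ψ₊^{(i)}(n)`. -/
noncomputable def psiPd (α β ε : ℂ) (i : ℕ) (n : ℤ) : ℂ :=
  (poch (ε + β + 1) n / poch (ε + α + β + 1) n) *
    (poch (-((n : ℂ) + ε + α + β)) (i : ℤ) * poch ((n : ℂ) + ε + 1) (i : ℤ)) /
      ((-2 : ℂ) ^ i * (i.factorial : ℂ) * poch (-α + 1) (i : ℤ))

/-- `φ₋^{(i)}(n)`. -/
noncomputable def phiMd (α β ε : ℂ) (i : ℕ) (n : ℤ) : ℂ :=
  (-1 : ℂ) ^ n * (poch (ε + β + 1) n / poch (ε + 1) n) *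
    (poch (-((n : ℂ) + ε)) (i : ℤ) * poch ((n : ℂ) + ε + α + β + 1) (i : ℤ)) /
      ((2 : ℂ) ^ i * (i.factorial : ℂ) * poch (β + 1) (i : ℤ))

/-- `ψ₋^{(i)}(n)`. -/
noncomputable def psiMd (α β ε : ℂ) (i : ℕ) (n : ℤ) : ℂ :=
  (-1 : ℂ) ^ n * (poch (ε + α + 1) n / poch (ε + α + β + 1) n) *
    (poch (-((n : ℂ) + ε + α + β)) (i : ℤ) * poch ((n : ℂ) + ε + 1) (i : ℤ)) /
      ((2 : ℂ) ^ i * (i.factorial : ℂ) * poch (-β + 1) (i : ℤ))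

/-!
Put `x = n + ε` and `s = α + β`. Conjugating `L` by the weight `w(n) = (ε+α+1)_n / (ε+1)_n` turns
it into a second-order difference operator whose coefficients sum to `1`, so `w⁻¹ (L - 1) w` only
sees the first differences of a function. The polynomial `q_i(x) = (-x)_i (x+s+1)_i` satisfies
`q_i(x+1) - q_i(x) = -i (2x+s+2) (-x)_{i-1} (x+s+2)_{i-1}`, and the factor `2x+s+2` (resp. `2x+s`
for the backward difference) cancels a denominator of `L`; what remains is
`w⁻¹ (L - 1) w q_i = -2 i (α+i) q_{i-1}`, which is the relation for `φ₊` before normalisation.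
The symmetry `(α, β, ε) ↦ (-α, -β, ε+α+β)` of `L` carries `φ₊` to `ψ₊`, and conjugation by `(-1)^n`,
which exchanges `α` with `β` and negates `L`, carries these to `φ₋` and `ψ₋`.
-/

section Pochhammer

theorem poch_natCast (a : ℂ) (k : ℕ) : poch a k = ∏ j ∈ Finset.range k, (a + j) := by
  simp [poch]

theorem poch_zero (a : ℂ) : poch a 0 = 1 := by
  simp [poch]

theorem poch_natCast_succ (a : ℂ) (k : ℕ) : poch a (k + 1 : ℕ) = poch a k * (a + k) := by
  simp only [poch_natCast, Finset.prod_range_succ]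

theorem poch_natCast_succ_left (a : ℂ) (k : ℕ) : poch a (k + 1 : ℕ) = a * poch (a + 1) k := by
  simp only [poch_natCast, Finset.prod_range_succ']
  push_cast
  simp only [add_zero, mul_comm, add_comm (1 : ℂ), add_assoc]

theorem mul_poch_add_one_natCast (a : ℂ) (k : ℕ) :
    a * poch (a + 1) k = poch a k * (a + k) := by
  rw [← poch_natCast_succ_left, poch_natCast_succ]

theorem poch_neg_natCast (a : ℂ) (k : ℕ) :
    poch a (-k) = (∏ j ∈ Finset.range k, (a - k + j))⁻¹ := by
  obtain rfl | hk := k.eq_zero_or_pos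
  · simp [poch]
  · simp [poch, hk.ne', sub_eq_add_neg]

theorem poch_int_succ {a : ℂ} {n : ℤ} (h : a + n ≠ 0) : poch a (n + 1) = poch a n * (a + n) := by
  obtain ⟨k, rfl | rfl⟩ := n.eq_nat_or_neg
  · exact_mod_cast poch_natCast_succ a k
  obtain _ | k := k
  · simpa using poch_natCast_succ a 0
  have shift : -((k + 1 : ℕ) : ℤ) + 1 = -(k : ℤ) := by push_cast; ring
  have prod_eq : ∏ j ∈ Finset.range (k + 1), (a - (k + 1 : ℕ) + j) =
      (∏ j ∈ Finset.range k, (a - k + j)) * (a + (-((k + 1 : ℕ) : ℤ) : ℤ)) := by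
    rw [Finset.prod_range_succ']
    congr 1
    · exact Finset.prod_congr rfl fun j _ => by push_cast; ring
    · push_cast; ring
  rw [shift, poch_neg_natCast, poch_neg_natCast, prod_eq, mul_inv, inv_mul_cancel_right₀ h]

theorem poch_div_poch_int_succ {a b : ℂ} {n : ℤ} (ha : a + n ≠ 0) (hb : b + n ≠ 0) :
    poch a (n + 1) / poch b (n + 1) = poch a n / poch b n * ((a + n) / (b + n)) := by
  rw [poch_int_succ ha, poch_int_succ hb, mul_div_mul_comm]

theorem poch_add_one_natCast_ne_zero {a : ℂ} {i : ℕ} (h : ∀ m : ℤ, a = m → (i : ℤ) < |m|) :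
    poch (a + 1) i ≠ 0 := by
  rw [poch_natCast, Finset.prod_ne_zero_iff]
  intro j hj hzero
  have hlt := h (-(j + 1)) (by push_cast; linear_combination hzero)
  rw [abs_neg, abs_of_nonneg (by positivity)] at hlt
  have := Finset.mem_range.mp hj
  omega

theorem poch_add_one_ne_zero_and_poch_neg_add_one_ne_zero {a : ℂ} {i : ℕ}
    (h : (∀ m : ℤ, a ≠ m) ∨ ∃ m : ℤ, a = m ∧ (i : ℤ) ≤ |m| - 1) :
    poch (a + 1) i ≠ 0 ∧ poch (-a + 1) i ≠ 0 := by
  have lt_abs : ∀ m : ℤ, a = m → (i : ℤ) < |m| := by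
    rintro m rfl
    obtain h | ⟨k, hk, hik⟩ := h
    · exact absurd rfl (h m)
    · rw [Int.cast_injective hk]
      omega
  refine ⟨poch_add_one_natCast_ne_zero lt_abs, poch_add_one_natCast_ne_zero fun m hm => ?_⟩
  simpa using lt_abs (-m) (by rw [Int.cast_neg, ← hm, neg_neg])

end Pochhammer

section ChainPoly

/-- The polynomial `q_i(x) = (-x)_i (x+s+1)_i`, a function of `x (x+s+1)`; up to the weight and a
constant it is `φ₊^{(i)}(n)` at `x = n + ε`, `s = α + β`. -/
noncomputable def chainPoly (s : ℂ) (i : ℕ) (x : ℂ) : ℂ :=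
  poch (-x) i * poch (x + s + 1) i

theorem chainPoly_zero (s x : ℂ) : chainPoly s 0 x = 1 := by
  rw [chainPoly, Nat.cast_zero, poch_zero, poch_zero, mul_one]

theorem chainPoly_succ_add_one_sub (s : ℂ) (k : ℕ) (x : ℂ) :
    chainPoly s (k + 1) (x + 1) - chainPoly s (k + 1) x =
      -(k + 1) * (2 * x + s + 2) * (poch (-x) k * poch (x + s + 1 + 1) k) := by
  have forward_left : poch (-(x + 1)) (k + 1 : ℕ) = -(x + 1) * poch (-x) k := by
    rw [poch_natCast_succ_left, show -(x + 1) + 1 = -x by ring]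
  have forward_right : poch (x + 1 + s + 1) (k + 1 : ℕ) =
      poch (x + s + 1 + 1) k * (x + s + 1 + 1 + k) := by
    rw [poch_natCast_succ, show x + 1 + s + 1 = x + s + 1 + 1 by ring]
  rw [chainPoly, chainPoly, forward_left, forward_right, poch_natCast_succ (-x),
    poch_natCast_succ_left (x + s + 1)]
  ring

theorem chainPoly_succ_sub_sub_one (s : ℂ) (k : ℕ) (x : ℂ) :
    chainPoly s (k + 1) x - chainPoly s (k + 1) (x - 1) =
      -(k + 1) * (2 * x + s) * (poch (-x + 1) k * poch (x + s + 1) k) := by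
  have h := chainPoly_succ_add_one_sub s k (x - 1)
  rw [sub_add_cancel, show -(x - 1) = -x + 1 by ring,
    show x - 1 + s + 1 + 1 = x + s + 1 by ring] at h
  rw [h]
  ring

theorem chainPoly_difference_equation (α β : ℂ) (k : ℕ) (x : ℂ)
    (h₀ : 2 * x + (α + β) ≠ 0) (h₂ : 2 * x + (α + β) + 2 ≠ 0) :
    (x + α + 1) * (x + (α + β) + 1) / (2 * x + (α + β) + 2) *
        (chainPoly (α + β) (k + 1) (x + 1) - chainPoly (α + β) (k + 1) x) -
      x * (x + β) / (2 * x + (α + β)) *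
        (chainPoly (α + β) (k + 1) x - chainPoly (α + β) (k + 1) (x - 1)) =
      -(k + 1) * (α + 1 + k) * (2 * x + (α + β) + 1) * chainPoly (α + β) k x := by
  have cancel (c d r : ℂ) (hd : d ≠ 0) : c / d * (-(k + 1) * d * r) = -(k + 1) * (c * r) := by
    field_simp
  have shift_left := mul_poch_add_one_natCast (-x) k
  have shift_right := mul_poch_add_one_natCast (x + (α + β) + 1) k
  rw [chainPoly_succ_add_one_sub, chainPoly_succ_sub_sub_one, cancel _ _ _ h₀, cancel _ _ _ h₂,
    chainPoly]
  linear_combination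
    -(k + 1) * (x + α + 1) * poch (-x) k * shift_right -
      (k + 1) * (x + β) * poch (x + (α + β) + 1) k * shift_left

end ChainPoly

section GoodParams

variable {α β ε : ℂ}

theorem GoodParams.swap (h : GoodParams α β ε) : GoodParams β α ε := fun m =>
  have ⟨hε, hεα, hεβ, hεαβ, h2εαβ⟩ := h m
  ⟨hε, hεβ, hεα, by rwa [add_right_comm], by rwa [add_right_comm]⟩

theorem GoodParams.reflect (h : GoodParams α β ε) : GoodParams (-α) (-β) (ε + α + β) := by
  intro m
  obtain ⟨hε, hεα, hεβ, hεαβ, h2εαβ⟩ := h m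
  refine ⟨hεαβ, ?_, ?_, ?_, ?_⟩
  · rwa [show ε + α + β + -α = ε + β by ring]
  · rwa [show ε + α + β + -β = ε + α by ring]
  · rwa [show ε + α + β + -α + -β = ε by ring]
  · rwa [show 2 * (ε + α + β) + -α + -β = 2 * ε + α + β by ring]

theorem GoodParams.intCast_add_ne_zero (h : GoodParams α β ε) (m : ℤ) : (m : ℂ) + ε ≠ 0 :=
  fun h0 => (h (-m)).1 (by push_cast; linear_combination h0)

theorem GoodParams.intCast_add_add_ne_zero (h : GoodParams α β ε) (m : ℤ) : (m : ℂ) + ε + α ≠ 0 :=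
  fun h0 => (h (-m)).2.1 (by push_cast; linear_combination h0)

theorem GoodParams.two_mul_intCast_add_add_ne_zero (h : GoodParams α β ε) (n m : ℤ) :
    2 * ((n : ℂ) + ε) + (α + β) + m ≠ 0 :=
  fun h0 => (h (-(2 * n + m))).2.2.2.2 (by push_cast; linear_combination h0)

end GoodParams

section Conjugation

variable {α β ε : ℂ}

/-- The weight `w(n) = (ε+α+1)_n / (ε+1)_n`, which is also `φ₊^{(0)}`. -/
noncomputable def phiWeight (α ε : ℂ) (n : ℤ) : ℂ :=
  poch (ε + α + 1) n / poch (ε + 1) n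

theorem phiWeight_add_one (h : GoodParams α β ε) (n : ℤ) :
    phiWeight α ε (n + 1) = phiWeight α ε n * ((n + ε + α + 1) / (n + ε + 1)) := by
  have hα : ε + α + 1 + n = n + ε + α + 1 := by ring
  have hε : ε + 1 + n = n + ε + 1 := by ring
  have hα0 := h.intCast_add_add_ne_zero (n + 1)
  have hε0 := h.intCast_add_ne_zero (n + 1)
  push_cast at hα0 hε0
  rw [phiWeight, poch_div_poch_int_succ, hα, hε, phiWeight]
  · convert hα0 using 1; ring
  · convert hε0 using 1; ring

theorem phiWeight_sub_one (h : GoodParams α β ε) (n : ℤ) :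
    phiWeight α ε (n - 1) = phiWeight α ε n * ((n + ε) / (n + ε + α)) := by
  have hstep := phiWeight_add_one h (n - 1)
  have hα0 := h.intCast_add_add_ne_zero n
  have hε0 := h.intCast_add_ne_zero n
  rw [sub_add_cancel] at hstep
  push_cast at hstep
  rw [show (n : ℂ) - 1 + ε + α + 1 = n + ε + α by ring,
    show (n : ℂ) - 1 + ε + 1 = n + ε by ring] at hstep
  rw [hstep]
  field_simp

theorem jacobiL_apply (α β ε : ℂ) (f : ℤ → ℂ) (n : ℤ) :
    jacobiL α β ε f n =
      2 * (n + ε + 1) * (n + ε + (α + β) + 1) /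
          ((2 * (n + ε) + (α + β) + 1) * (2 * (n + ε) + (α + β) + 2)) * f (n + 1) +
        (β ^ 2 - α ^ 2) / ((2 * (n + ε) + (α + β)) * (2 * (n + ε) + (α + β) + 2)) * f n +
        2 * (n + ε + α) * (n + ε + β) /
          ((2 * (n + ε) + (α + β)) * (2 * (n + ε) + (α + β) + 1)) * f (n - 1) := by
  unfold jacobiL
  ring_nf

theorem conjugated_coeffs_sum_eq_one (α β x : ℂ) (h₀ : 2 * x + (α + β) ≠ 0)
    (h₁ : 2 * x + (α + β) + 1 ≠ 0) (h₂ : 2 * x + (α + β) + 2 ≠ 0) :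
    2 * (x + α + 1) * (x + (α + β) + 1) / ((2 * x + (α + β) + 1) * (2 * x + (α + β) + 2)) +
        (β ^ 2 - α ^ 2) / ((2 * x + (α + β)) * (2 * x + (α + β) + 2)) +
        2 * x * (x + β) / ((2 * x + (α + β)) * (2 * x + (α + β) + 1)) = 1 := by
  field_simp
  ring

theorem jacobiL_phiWeight_mul_sub (h : GoodParams α β ε) (f : ℤ → ℂ) (n : ℤ) :
    jacobiL α β ε (fun m => phiWeight α ε m * f m) n - phiWeight α ε n * f n =
      2 * phiWeight α ε n / (2 * (n + ε) + (α + β) + 1) *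
        ((n + ε + α + 1) * (n + ε + (α + β) + 1) / (2 * (n + ε) + (α + β) + 2) *
            (f (n + 1) - f n) -
          (n + ε) * (n + ε + β) / (2 * (n + ε) + (α + β)) * (f n - f (n - 1))) := by
  have cancel_succ : (n + ε + 1) * ((n + ε + α + 1) / (n + ε + 1)) = n + ε + α + 1 :=
    mul_div_cancel₀ _ (by simpa [add_right_comm] using h.intCast_add_ne_zero (n + 1))
  have cancel_pred : (n + ε + α) * ((n + ε) / (n + ε + α)) = n + ε :=
    mul_div_cancel₀ _ (h.intCast_add_add_ne_zero n)
  have sum_eq_one := conjugated_coeffs_sum_eq_one α β (n + ε)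
    (by simpa using h.two_mul_intCast_add_add_ne_zero n 0)
    (mod_cast h.two_mul_intCast_add_add_ne_zero n 1)
    (mod_cast h.two_mul_intCast_add_add_ne_zero n 2)
  rw [jacobiL_apply, phiWeight_add_one h, phiWeight_sub_one h]
  simp only [← div_div] at sum_eq_one ⊢
  linear_combination
    2 * (n + ε + (α + β) + 1) / (2 * (n + ε) + (α + β) + 1) / (2 * (n + ε) + (α + β) + 2) *
        phiWeight α ε n * f (n + 1) * cancel_succ +
      2 * (n + ε + β) / (2 * (n + ε) + (α + β)) / (2 * (n + ε) + (α + β) + 1) *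
        phiWeight α ε n * f (n - 1) * cancel_pred +
      phiWeight α ε n * f n * sum_eq_one

theorem jacobiL_phiWeight_mul_chainPoly_succ (h : GoodParams α β ε) (k : ℕ) (n : ℤ) :
    jacobiL α β ε (fun m => phiWeight α ε m * chainPoly (α + β) (k + 1) (m + ε)) n -
        phiWeight α ε n * chainPoly (α + β) (k + 1) (n + ε) =
      -2 * (k + 1) * (α + 1 + k) * (phiWeight α ε n * chainPoly (α + β) k (n + ε)) := by
  have h₁ : 2 * (n + ε) + (α + β) + 1 ≠ 0 := mod_cast h.two_mul_intCast_add_add_ne_zero n 1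
  have hsucc : ((n + 1 : ℤ) : ℂ) + ε = n + ε + 1 := by push_cast; ring
  have hpred : ((n - 1 : ℤ) : ℂ) + ε = n + ε - 1 := by push_cast; ring
  rw [jacobiL_phiWeight_mul_sub h, hsucc, hpred,
    chainPoly_difference_equation α β k (n + ε)
      (by simpa using h.two_mul_intCast_add_add_ne_zero n 0)
      (mod_cast h.two_mul_intCast_add_add_ne_zero n 2)]
  field_simp

end Conjugation

section Jordan

variable {α β ε : ℂ}

theorem jacobiL_const_mul (c : ℂ) (f : ℤ → ℂ) (n : ℤ) :
    jacobiL α β ε (fun m => c * f m) n = c * jacobiL α β ε f n := by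
  unfold jacobiL
  ring

theorem phiPd_eq_const_mul (α β ε : ℂ) (i : ℕ) :
    phiPd α β ε i = fun n =>
      ((-2) ^ i * (i.factorial : ℂ) * poch (α + 1) i)⁻¹ *
        (phiWeight α ε n * chainPoly (α + β) i (n + ε)) := by
  funext n
  rw [phiPd, phiWeight, chainPoly, ← add_assoc ((n : ℂ) + ε), div_eq_inv_mul]

theorem jacobiL_phiPd_sub (h : GoodParams α β ε) {i : ℕ} (hi : poch (α + 1) i ≠ 0) (n : ℤ) :
    jacobiL α β ε (phiPd α β ε i) n - phiPd α β ε i n =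
      if i = 0 then 0 else phiPd α β ε (i - 1) n := by
  simp only [phiPd_eq_const_mul, jacobiL_const_mul, ← mul_sub]
  obtain _ | k := i
  · rw [jacobiL_phiWeight_mul_sub h]
    simp [chainPoly_zero]
  · rw [poch_natCast_succ, mul_ne_zero_iff] at hi
    obtain ⟨hpoch, hfactor⟩ := hi
    rw [jacobiL_phiWeight_mul_chainPoly_succ h, if_neg k.succ_ne_zero, Nat.add_sub_cancel,
      poch_natCast_succ, Nat.factorial_succ, pow_succ]
    push_cast
    field_simp

theorem jacobiL_reflect (α β ε : ℂ) : jacobiL (-α) (-β) (ε + α + β) = jacobiL α β ε := by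
  funext f n
  unfold jacobiL
  ring_nf

theorem phiPd_reflect (α β ε : ℂ) : phiPd (-α) (-β) (ε + α + β) = psiPd α β ε := by
  funext i n
  rw [phiPd, psiPd, show ε + α + β + -α + 1 = ε + β + 1 by ring,
    show (n : ℂ) + (ε + α + β) + -α + -β + 1 = n + ε + 1 by ring,
    show (n : ℂ) + (ε + α + β) = n + ε + α + β by ring]

theorem jacobiL_psiPd_sub (h : GoodParams α β ε) {i : ℕ} (hi : poch (-α + 1) i ≠ 0) (n : ℤ) :
    jacobiL α β ε (psiPd α β ε i) n - psiPd α β ε i n =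
      if i = 0 then 0 else psiPd α β ε (i - 1) n := by
  simpa only [jacobiL_reflect, phiPd_reflect] using jacobiL_phiPd_sub h.reflect hi n

/-- The sign twist `(-1)^{i+n} f_i(n)` of a sequence of functions on `ℤ`; it carries the chains at
the eigenvalue `1` for the parameters `(β, α)` to those at `-1` for `(α, β)`. -/
noncomputable def alternate (f : ℕ → ℤ → ℂ) (i : ℕ) (n : ℤ) : ℂ :=
  (-1) ^ i * ((-1) ^ n * f i n)

theorem jacobiL_neg_one_zpow_mul (f : ℤ → ℂ) (n : ℤ) :
    jacobiL α β ε (fun m => (-1) ^ m * f m) n = -((-1) ^ n * jacobiL β α ε f n) := by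
  have hsucc : (-1 : ℂ) ^ (n + 1) = -(-1) ^ n := by
    rw [zpow_add_one₀ (by norm_num), mul_neg_one]
  have hpred : (-1 : ℂ) ^ (n - 1) = -(-1) ^ n := by
    rw [zpow_sub_one₀ (by norm_num), inv_neg_one, mul_neg_one]
  simp only [jacobiL, hsucc, hpred, add_right_comm _ β α]
  ring

theorem jacobiL_alternate_add {f : ℕ → ℤ → ℂ} {i : ℕ} {n : ℤ}
    (hf : jacobiL β α ε (f i) n - f i n = if i = 0 then 0 else f (i - 1) n) :
    jacobiL α β ε (alternate f i) n + alternate f i n =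
      if i = 0 then 0 else alternate f (i - 1) n := by
  have twist : jacobiL α β ε (alternate f i) n + alternate f i n =
      -((-1) ^ i * ((-1) ^ n * (jacobiL β α ε (f i) n - f i n))) := by
    unfold alternate
    rw [jacobiL_const_mul, jacobiL_neg_one_zpow_mul]
    ring
  rw [twist, hf]
  obtain _ | k := i
  · simp
  · simp [alternate, pow_succ]

theorem two_pow_inv_eq (i : ℕ) : ((2 : ℂ) ^ i)⁻¹ = (-1) ^ i * ((-2) ^ i)⁻¹ := by
  rw [← inv_pow, ← inv_pow, ← mul_pow]
  norm_num

theorem alternate_phiPd (α β ε : ℂ) : alternate (phiPd β α ε) = phiMd α β ε := by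
  funext i n
  simp only [alternate, phiPd, phiMd, div_eq_mul_inv, mul_inv, two_pow_inv_eq,
    add_right_comm _ β α]
  ring

theorem alternate_psiPd (α β ε : ℂ) : alternate (psiPd β α ε) = psiMd α β ε := by
  funext i n
  simp only [alternate, psiPd, psiMd, div_eq_mul_inv, mul_inv, two_pow_inv_eq,
    add_right_comm _ β α]
  ring

theorem jacobiL_phiMd_add (h : GoodParams α β ε) {i : ℕ} (hi : poch (β + 1) i ≠ 0) (n : ℤ) :
    jacobiL α β ε (phiMd α β ε i) n + phiMd α β ε i n =
      if i = 0 then 0 else phiMd α β ε (i - 1) n := by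
  rw [← alternate_phiPd]
  exact jacobiL_alternate_add (jacobiL_phiPd_sub h.swap hi n)

theorem jacobiL_psiMd_add (h : GoodParams α β ε) {i : ℕ} (hi : poch (-β + 1) i ≠ 0) (n : ℤ) :
    jacobiL α β ε (psiMd α β ε i) n + psiMd α β ε i n =
      if i = 0 then 0 else psiMd α β ε (i - 1) n := by
  rw [← alternate_psiPd]
  exact jacobiL_alternate_add (jacobiL_psiPd_sub h.swap hi n)

end Jordan

theorem stmt3_general (α β ε : ℂ) (hgood : GoodParams α β ε) (i : ℕ) (n : ℤ) :
    (poch (α + 1) i ≠ 0 →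
      jacobiL α β ε (phiPd α β ε i) n - phiPd α β ε i n =
        if i = 0 then 0 else phiPd α β ε (i - 1) n) ∧
    (poch (-α + 1) i ≠ 0 →
      jacobiL α β ε (psiPd α β ε i) n - psiPd α β ε i n =
        if i = 0 then 0 else psiPd α β ε (i - 1) n) ∧
    (poch (β + 1) i ≠ 0 →
      jacobiL α β ε (phiMd α β ε i) n + phiMd α β ε i n =
        if i = 0 then 0 else phiMd α β ε (i - 1) n) ∧
    (poch (-β + 1) i ≠ 0 →
      jacobiL α β ε (psiMd α β ε i) n + psiMd α β ε i n =
        if i = 0 then 0 else psiMd α β ε (i - 1) n) :=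
  ⟨(jacobiL_phiPd_sub hgood · n), (jacobiL_psiPd_sub hgood · n), (jacobiL_phiMd_add hgood · n),
    (jacobiL_psiMd_add hgood · n)⟩

/-- The Jordan-chain relations
`(L_{α,β;ε} ∓ 1) φ_±^{(i)} = φ_±^{(i-1)}` and `(L_{α,β;ε} ∓ 1) ψ_±^{(i)} = ψ_±^{(i-1)}`
(with the convention that the `(-1)`-st functions vanish), valid for all `i ≥ 0`
when the relevant parameter is not an integer, and for `0 ≤ i ≤ |α|-1`
(resp. `0 ≤ i ≤ |β|-1`) when it is. -/
theorem stmt3 (α β ε : ℂ) (hgood : GoodParams α β ε) :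
    (∀ i : ℕ, ((∀ m : ℤ, α ≠ (m : ℂ)) ∨ (∃ m : ℤ, α = (m : ℂ) ∧ (i : ℤ) ≤ |m| - 1)) →
      ∀ n : ℤ,
        jacobiL α β ε (phiPd α β ε i) n - phiPd α β ε i n
          = (if i = 0 then 0 else phiPd α β ε (i - 1) n) ∧
        jacobiL α β ε (psiPd α β ε i) n - psiPd α β ε i n
          = (if i = 0 then 0 else psiPd α β ε (i - 1) n)) ∧
    (∀ i : ℕ, ((∀ m : ℤ, β ≠ (m : ℂ)) ∨ (∃ m : ℤ, β = (m : ℂ) ∧ (i : ℤ) ≤ |m| - 1)) →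
      ∀ n : ℤ,
        jacobiL α β ε (phiMd α β ε i) n + phiMd α β ε i n
          = (if i = 0 then 0 else phiMd α β ε (i - 1) n) ∧
        jacobiL α β ε (psiMd α β ε i) n + psiMd α β ε i n
          = (if i = 0 then 0 else psiMd α β ε (i - 1) n)) := by
  refine ⟨fun i hi n => ?_, fun i hi n => ?_⟩ <;>
    obtain ⟨phiP, psiP, phiM, psiM⟩ := stmt3_general α β ε hgood i n
  · exact (poch_add_one_ne_zero_and_poch_neg_add_one_ne_zero hi).imp phiP psiP
  · exact (poch_add_one_ne_zero_and_poch_neg_add_one_ne_zero hi).imp phiM psiM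
end

section
/- Let L₀ be a difference operator and P a regular difference operator on functions ℤ → ℂ. Then there exists a difference operator L such that L ∘ P = P ∘ L₀ if and only if L₀(Ker P) ⊆ Ker P. Moreover, when it exists, the difference operator L satisfying L ∘ P = P ∘ L₀ is unique. -/
/-- A difference operator `(Mf)(n) = ∑_{i=p}^{q} b_i(n) f(n+i)` on functions `ℤ → ℂ`,
with support `[p,q]`: the coefficients `b_p` and `b_q` are not identically zero. -/
structure DiffOp where
  p : ℤ
  q : ℤ
  hpq : p ≤ q
  b : ℤ → ℤ → ℂ
  hp : ∃ n : ℤ, b p n ≠ 0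
  hq : ∃ n : ℤ, b q n ≠ 0

/-- The action of a difference operator on a function `ℤ → ℂ`. -/
noncomputable def DiffOp.app (M : DiffOp) (f : ℤ → ℂ) (n : ℤ) : ℂ :=
  ∑ i ∈ Finset.Icc M.p M.q, M.b i n * f (n + i)

/-- A difference operator is regular if its first and last coefficients
vanish nowhere on `ℤ`. -/
def DiffOp.Regular (M : DiffOp) : Prop :=
  ∀ n : ℤ, M.b M.p n ≠ 0 ∧ M.b M.q n ≠ 0

/-- A difference operator as a linear endomorphism of `ℤ → ℂ`. -/
noncomputable def DiffOp.lin (M : DiffOp) : Module.End ℂ (ℤ → ℂ) where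
  toFun f := M.app f
  map_add' f g := by
    funext n
    simp only [DiffOp.app, Pi.add_apply, mul_add]
    exact Finset.sum_add_distrib
  map_smul' c f := by
    funext n
    simp only [DiffOp.app, Pi.smul_apply, smul_eq_mul, RingHom.id_apply, Finset.mul_sum]
    exact Finset.sum_congr rfl fun i _ => by ring

/-!
Let `[p, q]` and `[p₀, q₀]` be the supports of `P` and `L₀`. Since the extreme coefficients of `P`
vanish nowhere, `P h = g` can be solved by recursion to the right (dividing by the top coefficient)
and to the left (dividing by the bottom one). Hence `P` is surjective, which gives uniqueness, and
if `g` vanishes on a window `[s, t]` then `h` can be chosen to vanish on `[s + p, t + q]`.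

If `P f` vanishes on `[n + p₀, n + q₀]`, subtract from `f` such a solution `h` of `P h = P f`. Then
`f - h ∈ Ker P`, so `P (L₀ (f - h)) = 0`, while `P (L₀ h)` vanishes at `n` because it only
involves `h` on `[n + p₀ + p, n + q₀ + q]`. So the functional `f ↦ P (L₀ f) n` vanishes on the
common kernel of the finitely many functionals `f ↦ P f (n + i)`, `p₀ ≤ i ≤ q₀`, and is therefore a
linear combination of them; the coefficients of these combinations are the coefficients of `L`.
Comparing extreme coefficients in `L P = P L₀` shows that `L` again has support `[p₀, q₀]`.
-/

section BandOp

variable {R : Type*} [CommSemiring R] {p q : ℤ}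

/-- The operator `(T f)(n) = ∑_{i=p}^{q} a_i(n) f(n+i)` on functions `ℤ → R`. Nothing is required of
the extreme coefficients, so its support may be smaller than `[p, q]`. -/
noncomputable def bandOp (p q : ℤ) (a : ℤ → ℤ → R) : Module.End R (ℤ → R) where
  toFun f n := ∑ i ∈ Finset.Icc p q, a i n * f (n + i)
  map_add' f g := by
    funext n
    simp only [Pi.add_apply, mul_add, Finset.sum_add_distrib]
  map_smul' c f := by
    funext n
    simp only [Pi.smul_apply, smul_eq_mul, RingHom.id_apply, Finset.mul_sum, mul_left_comm]

theorem bandOp_apply (a : ℤ → ℤ → R) (f : ℤ → R) (n : ℤ) :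
    bandOp p q a f n = ∑ i ∈ Finset.Icc p q, a i n * f (n + i) :=
  rfl

theorem bandOp_apply_eq_zero (a : ℤ → ℤ → R) {f : ℤ → R} {n : ℤ}
    (hf : ∀ m ∈ Set.Icc (n + p) (n + q), f m = 0) : bandOp p q a f n = 0 := by
  rw [bandOp_apply]
  refine Finset.sum_eq_zero fun i hi => ?_
  obtain ⟨hpi, hiq⟩ := Finset.mem_Icc.1 hi
  rw [hf _ ⟨by lia, by lia⟩, mul_zero]

theorem bandOp_apply_eq_upper (hpq : p ≤ q) (a : ℤ → ℤ → R) {f : ℤ → R} {n : ℤ}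
    (hf : ∀ m < n + q, f m = 0) : bandOp p q a f n = a q n * f (n + q) := by
  refine Finset.sum_eq_single_of_mem q (Finset.right_mem_Icc.2 hpq) fun i hi hiq => ?_
  have := (Finset.mem_Icc.1 hi).2
  rw [hf _ (by lia), mul_zero]

theorem bandOp_apply_eq_lower (hpq : p ≤ q) (a : ℤ → ℤ → R) {f : ℤ → R} {n : ℤ}
    (hf : ∀ m > n + p, f m = 0) : bandOp p q a f n = a p n * f (n + p) := by
  refine Finset.sum_eq_single_of_mem p (Finset.left_mem_Icc.2 hpq) fun i hi hip => ?_
  have := (Finset.mem_Icc.1 hi).1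
  rw [hf _ (by lia), mul_zero]

variable {r s : ℤ}

theorem bandOp_bandOp_single_upper (hpq : p ≤ q) (hrs : r ≤ s) (a b : ℤ → ℤ → R) (n : ℤ) :
    bandOp p q a (bandOp r s b (Pi.single (n + q + s) 1)) n = a q n * b s (n + q) := by
  have single_eq_zero : ∀ m < n + q + s, (Pi.single (n + q + s) 1 : ℤ → R) m = 0 :=
    fun m hm => Pi.single_eq_of_ne hm.ne 1
  rw [bandOp_apply_eq_upper hpq, bandOp_apply_eq_upper hrs b single_eq_zero, Pi.single_eq_same,
    mul_one]
  exact fun m hm => bandOp_apply_eq_zero b fun l hl => single_eq_zero l (by grind)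

theorem bandOp_bandOp_single_lower (hpq : p ≤ q) (hrs : r ≤ s) (a b : ℤ → ℤ → R) (n : ℤ) :
    bandOp p q a (bandOp r s b (Pi.single (n + p + r) 1)) n = a p n * b r (n + p) := by
  have single_eq_zero : ∀ m > n + p + r, (Pi.single (n + p + r) 1 : ℤ → R) m = 0 :=
    fun m hm => Pi.single_eq_of_ne hm.ne' 1
  rw [bandOp_apply_eq_lower hpq, bandOp_apply_eq_lower hrs b single_eq_zero, Pi.single_eq_same,
    mul_one]
  exact fun m hm => bandOp_apply_eq_zero b fun l hl => single_eq_zero l (by grind)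

theorem bandOp_comp_neg (p q : ℤ) (a : ℤ → ℤ → R) (f : ℤ → R) (n : ℤ) :
    bandOp p q a (fun m => f (-m)) n = bandOp (-q) (-p) (fun i m => a (-i) (-m)) f (-n) := by
  simp only [bandOp_apply]
  refine Finset.sum_equiv (Equiv.neg ℤ) (fun i => ?_) fun i _ => ?_
  · simp only [Equiv.neg_apply, Finset.mem_Icc, neg_le_neg_iff, and_comm]
  · simp only [Equiv.neg_apply, neg_neg, neg_add]

end BandOp

section Solve

variable {K : Type*} [Field K] {p q : ℤ} {a : ℤ → ℤ → K}

/-- The solution `h` of `bandOp p q a h = g` on `(t, ∞)` that vanishes on `(-∞, t + q]`, computed by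
solving the equation at `m - q` for its top term `h m`. -/
noncomputable def forwardSolution (p q : ℤ) (a : ℤ → ℤ → K) (g : ℤ → K) (t m : ℤ) : K :=
  if m ≤ t + q then 0
  else (g (m - q) - ∑ i ∈ (Finset.Ico p q).attach,
    a i (m - q) * forwardSolution p q a g t (m - q + i)) / a q (m - q)
termination_by (m - t - q).toNat
decreasing_by
  have := (Finset.mem_Ico.1 i.2).2
  lia

theorem forwardSolution_of_le (g : ℤ → K) {t m : ℤ} (hm : m ≤ t + q) :
    forwardSolution p q a g t m = 0 := by
  rw [forwardSolution, if_pos hm]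

theorem bandOp_forwardSolution (hpq : p ≤ q) (g : ℤ → K) {t n : ℤ} (ha : a q n ≠ 0) (hn : t < n) :
    bandOp p q a (forwardSolution p q a g t) n = g n := by
  have top_term : forwardSolution p q a g t (n + q) =
      (g n - ∑ i ∈ Finset.Ico p q, a i n * forwardSolution p q a g t (n + i)) / a q n := by
    rw [forwardSolution, if_neg (by lia), add_sub_cancel_right,
      Finset.sum_attach _ fun i => a i n * forwardSolution p q a g t (n + i)]
  rw [bandOp_apply, ← Finset.sum_Ico_add_eq_sum_Icc hpq, top_term, mul_div_cancel₀ _ ha,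
    add_sub_cancel]

theorem exists_bandOp_eq_of_forall_le_eq_zero (hpq : p ≤ q) (ha : ∀ n, a q n ≠ 0)
    {g : ℤ → K} {t : ℤ} (hg : ∀ n ≤ t, g n = 0) :
    ∃ h, bandOp p q a h = g ∧ ∀ m ≤ t + q, h m = 0 := by
  refine ⟨forwardSolution p q a g t, funext fun n => ?_, fun m => forwardSolution_of_le g⟩
  rcases le_or_gt n t with hn | hn
  · rw [hg n hn]
    exact bandOp_apply_eq_zero a fun m hm => forwardSolution_of_le g (by grind)
  · exact bandOp_forwardSolution hpq g (ha n) hn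

theorem exists_bandOp_eq_of_forall_ge_eq_zero (hpq : p ≤ q) (ha : ∀ n, a p n ≠ 0)
    {g : ℤ → K} {s : ℤ} (hg : ∀ n ≥ s, g n = 0) :
    ∃ h, bandOp p q a h = g ∧ ∀ m ≥ s + p, h m = 0 := by
  obtain ⟨h, hh, hh_zero⟩ := exists_bandOp_eq_of_forall_le_eq_zero (neg_le_neg hpq)
    (a := fun i n => a (-i) (-n)) (g := fun n => g (-n)) (t := -s)
    (fun n => by simpa only [neg_neg] using ha (-n)) (fun n hn => hg _ (by lia))
  refine ⟨fun m => h (-m), funext fun n => ?_, fun m hm => hh_zero _ (by lia)⟩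
  calc bandOp p q a (fun m => h (-m)) n = g (- -n) := by rw [bandOp_comp_neg, hh]
    _ = g n := by rw [neg_neg]

theorem exists_bandOp_eq_of_forall_mem_Icc_eq_zero (hpq : p ≤ q) (hlower : ∀ n, a p n ≠ 0)
    (hupper : ∀ n, a q n ≠ 0) {g : ℤ → K} {s t : ℤ} (hst : s ≤ t + 1)
    (hg : ∀ n ∈ Set.Icc s t, g n = 0) :
    ∃ h, bandOp p q a h = g ∧ ∀ m ∈ Set.Icc (s + p) (t + q), h m = 0 := by
  obtain ⟨h, hh, hh_zero⟩ := exists_bandOp_eq_of_forall_le_eq_zero hpq hupper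
    (g := (Set.Ioi t).indicator g) fun n hn => Set.indicator_of_notMem (Set.notMem_Ioi.2 hn) g
  obtain ⟨k, hk, hk_zero⟩ := exists_bandOp_eq_of_forall_ge_eq_zero hpq hlower
    (g := (Set.Iio s).indicator g) fun n hn => Set.indicator_of_notMem (Set.notMem_Iio.2 hn) g
  refine ⟨h + k, ?_, fun m hm => ?_⟩
  · rw [map_add, hh, hk]
    funext n
    simp only [Pi.add_apply, Set.indicator_apply, Set.mem_Ioi, Set.mem_Iio]
    grind
  · rw [Pi.add_apply, hh_zero m hm.2, hk_zero m hm.1, add_zero]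

theorem bandOp_surjective (hpq : p ≤ q) (hlower : ∀ n, a p n ≠ 0) (hupper : ∀ n, a q n ≠ 0) :
    Function.Surjective (bandOp p q a) := fun g => by
  obtain ⟨h, hh, -⟩ := exists_bandOp_eq_of_forall_mem_Icc_eq_zero hpq hlower hupper (g := g)
    (s := 1) (t := 0) (by lia) fun n hn => by grind
  exact ⟨h, hh⟩

end Solve

section Factor

variable {K : Type*} [Field K]

theorem exists_eq_sum_mul_of_forall_eq_zero {ι V : Type*} [AddCommGroup V] [Module K V]
    (s : Finset ι) (v : ι → Module.Dual K V) (φ : Module.Dual K V)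
    (h : ∀ x, (∀ i ∈ s, v i x = 0) → φ x = 0) :
    ∃ c : ι → K, ∀ x, ∑ i ∈ s, c i * v i x = φ x := by
  have ker_le : ⨅ i : s, LinearMap.ker (v i) ≤ LinearMap.ker φ := fun x hx => by
    simp only [Submodule.mem_iInf, LinearMap.mem_ker, Subtype.forall] at hx
    exact h x hx
  have mem_span : φ ∈ Submodule.span K (v '' s) := by
    rw [Set.image_eq_range]
    exact mem_span_of_iInf_ker_le_ker ker_le
  obtain ⟨c, rfl⟩ := (Submodule.mem_span_image_finset_iff_exists_fun' K).1 mem_span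
  exact ⟨c, fun x => by simp only [LinearMap.sum_apply, LinearMap.smul_apply, smul_eq_mul]⟩

theorem exists_bandOp_mul_eq {r s : ℤ} {P T : Module.End K (ℤ → K)}
    (h : ∀ f n, (∀ m ∈ Set.Icc (n + r) (n + s), P f m = 0) → T f n = 0) :
    ∃ c, bandOp r s c * P = T := by
  have coeffs (n : ℤ) : ∃ c : ℤ → K, ∀ f, ∑ i ∈ Finset.Icc r s, c i * P f (n + i) = T f n :=
    exists_eq_sum_mul_of_forall_eq_zero (Finset.Icc r s)
      (fun i => LinearMap.proj (n + i) ∘ₗ P) (LinearMap.proj n ∘ₗ T) fun f hf =>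
        h f n fun m hm => by
          simpa using hf (m - n) (Finset.mem_Icc.2 ⟨by grind, by grind⟩)
  choose c hc using coeffs
  exact ⟨fun i n => c n i, LinearMap.ext fun f => funext fun n => hc n f⟩

variable {p q p₀ q₀ : ℤ} {a a₀ : ℤ → ℤ → K}

theorem bandOp_bandOp_apply_eq_zero_of_ker_le_comap (hpq : p ≤ q) (hlower : ∀ n, a p n ≠ 0)
    (hupper : ∀ n, a q n ≠ 0) (hpq₀ : p₀ ≤ q₀)
    (hker : (bandOp p q a).ker ≤ (bandOp p q a).ker.comap (bandOp p₀ q₀ a₀)) {f : ℤ → K} {n : ℤ}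
    (hf : ∀ m ∈ Set.Icc (n + p₀) (n + q₀), bandOp p q a f m = 0) :
    bandOp p q a (bandOp p₀ q₀ a₀ f) n = 0 := by
  obtain ⟨h, hh, hh_zero⟩ :=
    exists_bandOp_eq_of_forall_mem_Icc_eq_zero hpq hlower hupper (by lia) hf
  have sub_mem_ker : f - h ∈ (bandOp p q a).ker := by
    rw [LinearMap.mem_ker, map_sub, hh, sub_self]
  have agree : bandOp p q a (bandOp p₀ q₀ a₀ f) = bandOp p q a (bandOp p₀ q₀ a₀ h) := by
    rw [← sub_eq_zero, ← map_sub, ← map_sub]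
    exact hker sub_mem_ker
  rw [agree]
  exact bandOp_apply_eq_zero a fun m hm => bandOp_apply_eq_zero a₀ fun l hl =>
    hh_zero l ⟨by grind, by grind⟩

end Factor

section IsDiffOp

/-- The difference operators on functions `ℤ → R`. The support `[p, q]` is existentially
quantified. -/
def IsDiffOp {R : Type*} [CommSemiring R] (T : Module.End R (ℤ → R)) : Prop :=
  ∃ p q : ℤ, ∃ a : ℤ → ℤ → R,
    p ≤ q ∧ (∃ n, a p n ≠ 0) ∧ (∃ n, a q n ≠ 0) ∧ bandOp p q a = T

/-- The regular difference operators on functions `ℤ → R`: both extreme coefficients vanish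
nowhere. -/
def IsRegularDiffOp {R : Type*} [CommSemiring R] (T : Module.End R (ℤ → R)) : Prop :=
  ∃ p q : ℤ, ∃ a : ℤ → ℤ → R,
    p ≤ q ∧ (∀ n, a p n ≠ 0) ∧ (∀ n, a q n ≠ 0) ∧ bandOp p q a = T

theorem IsRegularDiffOp.surjective {K : Type*} [Field K] {P : Module.End K (ℤ → K)}
    (hP : IsRegularDiffOp P) : Function.Surjective P := by
  obtain ⟨p, q, a, hpq, hlower, hupper, rfl⟩ := hP
  exact bandOp_surjective hpq hlower hupper

theorem IsDiffOp.exists_mul_eq_mul_of_ker_le_comap {K : Type*} [Field K]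
    {L₀ P : Module.End K (ℤ → K)} (hL₀ : IsDiffOp L₀) (hP : IsRegularDiffOp P)
    (hker : P.ker ≤ P.ker.comap L₀) : ∃ L, IsDiffOp L ∧ L * P = P * L₀ := by
  obtain ⟨p₀, q₀, a₀, hpq₀, ⟨k, hk⟩, ⟨l, hl⟩, rfl⟩ := hL₀
  obtain ⟨p, q, a, hpq, hlower, hupper, rfl⟩ := hP
  obtain ⟨c, hc⟩ := exists_bandOp_mul_eq (T := bandOp p q a * bandOp p₀ q₀ a₀) fun _ _ =>
    bandOp_bandOp_apply_eq_zero_of_ker_le_comap hpq hlower hupper hpq₀ hker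
  have lower_coeff (n : ℤ) : c p₀ n * a p (n + p₀) = a p n * a₀ p₀ (n + p) := by
    rw [← bandOp_bandOp_single_lower hpq₀ hpq, ← bandOp_bandOp_single_lower hpq hpq₀,
      add_right_comm]
    exact congrFun (LinearMap.congr_fun hc _) n
  have upper_coeff (n : ℤ) : c q₀ n * a q (n + q₀) = a q n * a₀ q₀ (n + q) := by
    rw [← bandOp_bandOp_single_upper hpq₀ hpq, ← bandOp_bandOp_single_upper hpq hpq₀,
      add_right_comm]
    exact congrFun (LinearMap.congr_fun hc _) n
  refine ⟨_, ⟨p₀, q₀, c, hpq₀, ⟨k - p, left_ne_zero_of_mul (b := a p (k - p + p₀)) ?_⟩,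
    ⟨l - q, left_ne_zero_of_mul (b := a q (l - q + q₀)) ?_⟩, rfl⟩, hc⟩
  · rw [lower_coeff, sub_add_cancel]
    exact mul_ne_zero (hlower _) hk
  · rw [upper_coeff, sub_add_cancel]
    exact mul_ne_zero (hupper _) hl

end IsDiffOp

theorem stmt6_general {K : Type*} [Field K] {L₀ P : Module.End K (ℤ → K)} (hL₀ : IsDiffOp L₀)
    (hP : IsRegularDiffOp P) :
    ((∃ L, IsDiffOp L ∧ L * P = P * L₀) ↔ P.ker ≤ P.ker.comap L₀) ∧
      ∀ L L' : Module.End K (ℤ → K), L * P = P * L₀ → L' * P = P * L₀ → L = L' := by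
  refine ⟨⟨?_, hL₀.exists_mul_eq_mul_of_ker_le_comap hP⟩, fun L L' hL hL' => ?_⟩
  · rintro ⟨L, -, hL⟩ f hf
    calc P (L₀ f) = L (P f) := (LinearMap.congr_fun hL f).symm
      _ = 0 := by rw [LinearMap.mem_ker.1 hf, map_zero]
  · exact (LinearMap.cancel_right hP.surjective).1 (hL.trans hL'.symm)

namespace DiffOp

theorem isDiffOp_iff_exists_lin_eq {T : Module.End ℂ (ℤ → ℂ)} :
    IsDiffOp T ↔ ∃ M : DiffOp, M.lin = T :=
  ⟨fun ⟨p, q, a, hpq, hp, hq, hT⟩ => ⟨⟨p, q, hpq, a, hp, hq⟩, hT⟩,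
    fun ⟨M, hM⟩ => ⟨M.p, M.q, M.b, M.hpq, M.hp, M.hq, hM⟩⟩

theorem Regular.isRegularDiffOp_lin {M : DiffOp} (hM : M.Regular) : IsRegularDiffOp M.lin :=
  ⟨M.p, M.q, M.b, M.hpq, fun n => (hM n).1, fun n => (hM n).2, rfl⟩

theorem lin_mul_lin_eq_iff {L P L₀ : DiffOp} :
    L.lin * P.lin = P.lin * L₀.lin ↔ ∀ f, L.app (P.app f) = P.app (L₀.app f) :=
  LinearMap.ext_iff

end DiffOp

/-- For a regular difference operator `P` and a difference operator
`L₀`, a difference operator `L` with `L ∘ P = P ∘ L₀` exists iff `L₀` preserves the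
kernel of `P`; moreover such an `L` is unique (as an operator). -/
theorem stmt6 (L₀ P : DiffOp) (hreg : P.Regular) :
    ((∃ L : DiffOp, ∀ f : ℤ → ℂ, L.app (P.app f) = P.app (L₀.app f)) ↔
      (∀ f : ℤ → ℂ, P.app f = 0 → P.app (L₀.app f) = 0)) ∧
    (∀ L L' : DiffOp,
      (∀ f : ℤ → ℂ, L.app (P.app f) = P.app (L₀.app f)) →
      (∀ f : ℤ → ℂ, L'.app (P.app f) = P.app (L₀.app f)) →
      ∀ f : ℤ → ℂ, L.app f = L'.app f) := by
  obtain ⟨exists_iff, unique⟩ :=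
    stmt6_general (DiffOp.isDiffOp_iff_exists_lin_eq.2 ⟨L₀, rfl⟩) hreg.isRegularDiffOp_lin
  simp only [DiffOp.isDiffOp_iff_exists_lin_eq, exists_exists_eq_and,
    DiffOp.lin_mul_lin_eq_iff] at exists_iff
  exact ⟨exists_iff, fun L L' hL hL' => LinearMap.congr_fun <|
    unique L.lin L'.lin (DiffOp.lin_mul_lin_eq_iff.2 hL) (DiffOp.lin_mul_lin_eq_iff.2 hL')⟩
end

section
/- Let P be a regular difference operator with support [m₁,m₂] whose leading coefficient is identically 1, i.e. (Pf)(n) = f(n+m₂) + ∑_{i=m₁}^{m₂−1} b_i(n)·f(n+i), set m = m₂ − m₁, and let f^{(1)},…,f^{(m)} be a basis of Ker P. Then for every n ∈ ℤ the m×m matrix (f^{(i)}(n+j))_{1≤i≤m, m₁≤j≤m₂−1} is invertible, and for every function f : ℤ → ℂ and every n ∈ ℤ, (Pf)(n) equals the determinant of the (m+1)×(m+1) matrix whose rows, indexed by j = m₁,…,m₂, are (f^{(1)}(n+j),…,f^{(m)}(n+j), f(n+j)), divided by the determinant of the m×m matrix (f^{(i)}(n+j))_{1≤i≤m, m₁≤j≤m₂−1}.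 -/
/-!
A solution of a regular recurrence that vanishes on `m` consecutive integers vanishes on the
neighbouring ones as well, hence everywhere. So a linear relation between the columns of the
matrix `(F i (n + j))` for a single `n` is already a linear relation between the solutions `F i`,
and the matrix is invertible. For the formula, replace the last row of the bordered matrix by the
combination of its rows whose weights are the coefficients of the operator: this multiplies the
determinant by the leading coefficient, and the new row is `(0, …, 0, (P f)(n))`.
-/

open Matrix

section Windows

variable {R : Type*}

/-- The values of `g` at the `m` consecutive integers `n, …, n + m - 1`. -/
def window (m : ℕ) (g : ℤ → R) (n : ℤ) : Fin m → R :=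
  fun j => g (n + (j : ℕ))

variable [Zero R] {m : ℕ} {g : ℤ → R} {n : ℤ}

theorem window_succ_eq_zero_iff_left :
    window (m + 1) g n = 0 ↔ g n = 0 ∧ window m g (n + 1) = 0 := by
  simp only [funext_iff, Fin.forall_fin_succ (n := m), window, Pi.zero_apply, Fin.val_zero,
    Fin.val_succ, Nat.cast_zero, Nat.cast_succ, add_zero, add_assoc, add_comm (1 : ℤ)]

theorem window_succ_eq_zero_iff_right :
    window (m + 1) g n = 0 ↔ window m g n = 0 ∧ g (n + m) = 0 := by
  simp only [funext_iff, Fin.forall_fin_succ' (n := m), window, Pi.zero_apply, Fin.val_castSucc,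
    Fin.val_last]

end Windows

section RecurrenceOp

variable {R : Type*} {m : ℕ}

/-- The difference operator `f ↦ ∑ j, a j · f (· + j)` supported on `[0, m]`, with coefficients in
an arbitrary commutative semiring; every other support is a translate of this one. -/
def recurrenceOp [CommSemiring R] (a : Fin (m + 1) → ℤ → R) : (ℤ → R) →ₗ[R] (ℤ → R) where
  toFun f n := ∑ j, a j n * window (m + 1) f n j
  map_add' f g := by
    funext n
    simp only [window, Pi.add_apply, mul_add, Finset.sum_add_distrib]
  map_smul' c f := by
    funext n
    simp only [window, Pi.smul_apply, smul_eq_mul, RingHom.id_apply, Finset.mul_sum,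
      mul_left_comm c]

theorem recurrenceOp_apply [CommSemiring R] (a : Fin (m + 1) → ℤ → R) (f : ℤ → R) (n : ℤ) :
    recurrenceOp a f n = ∑ j, a j n * window (m + 1) f n j :=
  rfl

variable [CommSemiring R] [NoZeroDivisors R] {a : Fin (m + 1) → ℤ → R} {g : ℤ → R} {n : ℤ}

theorem window_succ_eq_zero_iff_of_last_coeff_ne_zero (hg : recurrenceOp a g n = 0)
    (hlast : a (Fin.last m) n ≠ 0) : window (m + 1) g n = 0 ↔ window m g n = 0 := by
  rw [window_succ_eq_zero_iff_right, and_iff_left_iff_imp]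
  intro hw
  have hinit (j : Fin m) : window (m + 1) g n j.castSucc = 0 := congrFun hw j
  simp only [recurrenceOp_apply, Fin.sum_univ_castSucc, hinit, mul_zero, Finset.sum_const_zero,
    zero_add] at hg
  exact (mul_eq_zero.1 hg).resolve_left hlast

theorem window_succ_eq_zero_iff_of_zero_coeff_ne_zero (hg : recurrenceOp a g n = 0)
    (hzero : a 0 n ≠ 0) : window (m + 1) g n = 0 ↔ window m g (n + 1) = 0 := by
  rw [window_succ_eq_zero_iff_left, and_iff_right_iff_imp]
  intro hw
  have htail (j : Fin m) : window (m + 1) g n j.succ = 0 := by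
    simpa [window, add_assoc, add_comm (1 : ℤ)] using congrFun hw j
  simp only [recurrenceOp_apply, Fin.sum_univ_succ, htail, mul_zero, Finset.sum_const_zero,
    add_zero] at hg
  simpa [window] using (mul_eq_zero.1 hg).resolve_left hzero

theorem eq_zero_of_recurrenceOp_eq_zero_of_window_eq_zero (hzero : ∀ n, a 0 n ≠ 0)
    (hlast : ∀ n, a (Fin.last m) n ≠ 0) (hg : recurrenceOp a g = 0) (hw : window m g n = 0) :
    g = 0 := by
  have hleft (k : ℤ) := window_succ_eq_zero_iff_of_last_coeff_ne_zero (congrFun hg k) (hlast k)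
  have hright (k : ℤ) := window_succ_eq_zero_iff_of_zero_coeff_ne_zero (congrFun hg k) (hzero k)
  have hshift (k : ℤ) : window m g (k + 1) = 0 ↔ window m g k = 0 := (hright k).symm.trans (hleft k)
  have hall (k : ℤ) : window m g k = 0 := by
    induction k using Int.inductionOn' (b := n) with
    | zero => exact hw
    | succ k _ ih => exact (hshift k).2 ih
    | pred k _ ih => exact (hshift (k - 1)).1 (by rwa [sub_add_cancel])
  exact funext fun k => (window_succ_eq_zero_iff_left.1 ((hleft k).2 (hall k))).1

end RecurrenceOp

section Casorati

variable {R : Type*} {m : ℕ}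

/-- The Casorati matrix of the sequences `F i` at `n`, the discrete analogue of the Wronskian
matrix: its `i`-th column consists of the values of `F i` at `n, …, n + m - 1`. -/
def casoratiMatrix (F : Fin m → ℤ → R) (n : ℤ) : Matrix (Fin m) (Fin m) R :=
  of fun j i => window m (F i) n j

theorem casoratiMatrix_snoc_submatrix_castSucc (F : Fin m → ℤ → R) (f : ℤ → R) (n : ℤ) :
    (casoratiMatrix (Fin.snoc F f : Fin (m + 1) → ℤ → R) n).submatrix Fin.castSucc Fin.castSucc =
      casoratiMatrix F n := by
  ext j i
  simp [casoratiMatrix, window]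

theorem casoratiMatrix_snoc_eq_dite (F : Fin m → ℤ → R) (f : ℤ → R) (n : ℤ) :
    casoratiMatrix (Fin.snoc F f : Fin (m + 1) → ℤ → R) n =
      of fun j c : Fin (m + 1) =>
        if h : (c : ℕ) < m then F ⟨c, h⟩ (n + (j : ℕ)) else f (n + (j : ℕ)) := by
  ext j c
  cases c using Fin.lastCases <;> simp [casoratiMatrix, window]

theorem casoratiMatrix_mulVec [CommSemiring R] (F : Fin m → ℤ → R) (n : ℤ) (v : Fin m → R) :
    casoratiMatrix F n *ᵥ v = window m (∑ i, v i • F i) n := by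
  ext j
  simp [casoratiMatrix, window, mulVec, dotProduct, mul_comm]

theorem vecMul_casoratiMatrix [CommSemiring R] (a : Fin (m + 1) → ℤ → R)
    (G : Fin (m + 1) → ℤ → R) (n : ℤ) :
    (fun j => a j n) ᵥ* casoratiMatrix G n = fun i => recurrenceOp a (G i) n :=
  rfl

theorem det_casoratiMatrix_ne_zero [CommRing R] [IsDomain R] {a : Fin (m + 1) → ℤ → R}
    {F : Fin m → ℤ → R} (hzero : ∀ n, a 0 n ≠ 0) (hlast : ∀ n, a (Fin.last m) n ≠ 0)
    (hker : ∀ i, recurrenceOp a (F i) = 0) (hind : LinearIndependent R F) (n : ℤ) :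
    (casoratiMatrix F n).det ≠ 0 := by
  intro hdet
  obtain ⟨v, hv, hFv⟩ := exists_mulVec_eq_zero_iff.2 hdet
  rw [casoratiMatrix_mulVec] at hFv
  have hsol : recurrenceOp a (∑ i, v i • F i) = 0 := by
    simp only [map_sum, map_smul, hker, smul_zero, Finset.sum_const_zero]
  have hrel : ∑ i, v i • F i = 0 :=
    eq_zero_of_recurrenceOp_eq_zero_of_window_eq_zero hzero hlast hsol hFv
  exact hv (funext (Fintype.linearIndependent_iff.1 hind v hrel))

theorem mul_det_eq_vecMul_last_mul_det_submatrix [CommRing R]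
    (A : Matrix (Fin (m + 1)) (Fin (m + 1)) R) (c : Fin (m + 1) → R)
    (hc : ∀ i : Fin m, (c ᵥ* A) i.castSucc = 0) :
    c (Fin.last m) * A.det =
      (c ᵥ* A) (Fin.last m) * (A.submatrix Fin.castSucc Fin.castSucc).det := by
  have hminor : (A.updateRow (Fin.last m) (c ᵥ* A)).submatrix
      (Fin.last m).succAbove (Fin.last m).succAbove =
        A.submatrix Fin.castSucc Fin.castSucc := by
    rw [submatrix_updateRow_succAbove, Fin.succAbove_last]
  calc c (Fin.last m) * A.det = (A.updateRow (Fin.last m) (c ᵥ* A)).det := by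
        rw [vecMul_eq_sum, det_updateRow_sum, smul_eq_mul]
    _ = (c ᵥ* A) (Fin.last m) * (A.submatrix Fin.castSucc Fin.castSucc).det := by
        rw [det_succ_row _ (Fin.last m), Fin.sum_univ_castSucc, hminor]
        simp only [updateRow_self, hc, mul_zero, zero_mul, Finset.sum_const_zero, zero_add,
          Even.neg_one_pow ⟨_, rfl⟩, one_mul]

theorem recurrenceOp_mul_det_casoratiMatrix [CommRing R] {a : Fin (m + 1) → ℤ → R}
    {F : Fin m → ℤ → R} {n : ℤ} (hker : ∀ i, recurrenceOp a (F i) n = 0) (f : ℤ → R) :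
    recurrenceOp a f n * (casoratiMatrix F n).det =
      a (Fin.last m) n * (casoratiMatrix (Fin.snoc F f : Fin (m + 1) → ℤ → R) n).det := by
  have h := mul_det_eq_vecMul_last_mul_det_submatrix
    (casoratiMatrix (Fin.snoc F f : Fin (m + 1) → ℤ → R) n) (fun j => a j n)
    fun i => by simp only [vecMul_casoratiMatrix, Fin.snoc_castSucc, hker]
  simpa only [vecMul_casoratiMatrix, Fin.snoc_last, casoratiMatrix_snoc_submatrix_castSucc]
    using h.symm

theorem stmt8_general {K : Type*} [Field K] {a : Fin (m + 1) → ℤ → K} {F : Fin m → ℤ → K}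
    (hzero : ∀ n, a 0 n ≠ 0) (hlast : ∀ n, a (Fin.last m) n ≠ 0)
    (hker : ∀ i, recurrenceOp a (F i) = 0) (hind : LinearIndependent K F) :
    (∀ n, (casoratiMatrix F n).det ≠ 0) ∧
    ∀ f n, recurrenceOp a f n =
      a (Fin.last m) n * (casoratiMatrix (Fin.snoc F f : Fin (m + 1) → ℤ → K) n).det /
        (casoratiMatrix F n).det := by
  have hdet := det_casoratiMatrix_ne_zero hzero hlast hker hind
  exact ⟨hdet, fun f n => (eq_div_iff (hdet n)).2
    (recurrenceOp_mul_det_casoratiMatrix (fun i => congrFun (hker i) n) f)⟩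

end Casorati

namespace DiffOp

/-- The coefficients of `P`, with its support `[p, p + m]` translated to `[0, m]`: the window that
`P` reads at `n` starts at `n + p`, which is the base point used by `recurrenceOp`. -/
def translatedCoeff (P : DiffOp) (m : ℕ) (j : Fin (m + 1)) (n : ℤ) : ℂ :=
  P.b (P.p + (j : ℕ)) (n - P.p)

variable {P : DiffOp} {m : ℕ}

theorem Regular.translatedCoeff_zero_ne_zero (hreg : P.Regular) (n : ℤ) :
    P.translatedCoeff m 0 n ≠ 0 := by
  simpa [translatedCoeff] using (hreg (n - P.p)).1

theorem translatedCoeff_last (hm : (m : ℤ) = P.q - P.p) (n : ℤ) :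
    P.translatedCoeff m (Fin.last m) n = P.b P.q (n - P.p) := by
  rw [translatedCoeff, Fin.val_last, hm, add_sub_cancel]

theorem Regular.translatedCoeff_last_ne_zero (hreg : P.Regular) (hm : (m : ℤ) = P.q - P.p)
    (n : ℤ) : P.translatedCoeff m (Fin.last m) n ≠ 0 := by
  rw [translatedCoeff_last hm]
  exact (hreg (n - P.p)).2

theorem recurrenceOp_translatedCoeff (hm : (m : ℤ) = P.q - P.p) (f : ℤ → ℂ) (n : ℤ) :
    recurrenceOp (P.translatedCoeff m) f n = P.app f (n - P.p) := by
  have hcard : (P.q + 1 - P.p).toNat = m + 1 := by omega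
  rw [recurrenceOp_apply, app, Int.Icc_eq_finset_map, Finset.sum_map, hcard, Finset.sum_range]
  simp [translatedCoeff, window, ← add_assoc]

theorem recurrenceOp_translatedCoeff_eq_zero (hm : (m : ℤ) = P.q - P.p) {f : ℤ → ℂ}
    (hf : P.app f = 0) : recurrenceOp (P.translatedCoeff m) f = 0 :=
  funext fun n => (recurrenceOp_translatedCoeff hm f n).trans (congrFun hf _)

end DiffOp

/-- Reconstruction of a regular difference operator with leading
coefficient `1` from a basis of its kernel, via quotients of determinants. -/
theorem stmt8 (P : DiffOp) (hreg : P.Regular) (hlead : ∀ n : ℤ, P.b P.q n = 1)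
    (m : ℕ) (hm : (m : ℤ) = P.q - P.p)
    (F : Fin m → (ℤ → ℂ))
    (hker : ∀ i, P.app (F i) = 0)
    (hind : LinearIndependent ℂ F)
    (hspan : Submodule.span ℂ (Set.range F) = LinearMap.ker P.lin) :
    (∀ n : ℤ,
      (Matrix.of fun j i : Fin m => F i (n + P.p + (j : ℕ))).det ≠ 0) ∧
    (∀ (f : ℤ → ℂ) (n : ℤ),
      P.app f n =
        (Matrix.of fun (j c : Fin (m + 1)) =>
          if h : (c : ℕ) < m then F ⟨(c : ℕ), h⟩ (n + P.p + (j : ℕ))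
          else f (n + P.p + (j : ℕ))).det /
        (Matrix.of fun j i : Fin m => F i (n + P.p + (j : ℕ))).det) := by
  obtain ⟨hdet, hformula⟩ := stmt8_general hreg.translatedCoeff_zero_ne_zero
    (hreg.translatedCoeff_last_ne_zero hm)
    (fun i => DiffOp.recurrenceOp_translatedCoeff_eq_zero hm (hker i)) hind
  refine ⟨fun n => hdet (n + P.p), fun f n => ?_⟩
  have h := hformula f (n + P.p)
  rwa [DiffOp.recurrenceOp_translatedCoeff hm, DiffOp.translatedCoeff_last hm,
    add_sub_cancel_right, hlead, one_mul, casoratiMatrix_snoc_eq_dite] at h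
end

section
/- Let P be a regular difference operator and let L, L₀ be difference operators on functions ℤ → ℂ satisfying L ∘ P = P ∘ L₀. If L₀ has support [p,q], then L also has support [p,q]; moreover L is regular if and only if L₀ is regular. -/
/-!
If `f` vanishes below `n + M.q`, then `M.app f n` sees only the top coefficient of `M`. Hence top
coefficients multiply under composition, and comparing the top coefficients of `L ∘ P` and `P ∘ L₀`,
where those of `P` never vanish, identifies the upper ends of the supports of `L` and `L₀` and the
zeros of their top coefficients up to a shift by `P.q`. The lower ends follow by conjugating all
operators with the reflection `n ↦ -n` of `ℤ`.
-/

namespace DiffOp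

/-- The half of regularity concerning the upper end of the support: the coefficient `b_q` vanishes
nowhere. The other half is `UpperRegular` of the reflected operator. -/
def UpperRegular (M : DiffOp) : Prop :=
  ∀ n : ℤ, M.b M.q n ≠ 0

/-- The conjugate of a difference operator by the reflection `n ↦ -n` of `ℤ`, which exchanges the
two ends of the support. -/
def reflect (M : DiffOp) : DiffOp where
  p := -M.q
  q := -M.p
  hpq := neg_le_neg M.hpq
  b i n := M.b (-i) (-n)
  hp := by simpa only [neg_neg] using neg_surjective.exists.mp M.hq
  hq := by simpa only [neg_neg] using neg_surjective.exists.mp M.hp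

/-- `P` intertwines `L₀` and `L`, that is, `L ∘ P = P ∘ L₀`. -/
def Intertwines (P L₀ L : DiffOp) : Prop :=
  ∀ f : ℤ → ℂ, L.app (P.app f) = P.app (L₀.app f)

section TopCoefficient

variable (M N : DiffOp) {f : ℤ → ℂ} {m n : ℤ}

theorem app_eq_zero_of_add_lt (hf : ∀ k < m, f k = 0) (hn : n + M.q < m) : M.app f n = 0 := by
  refine Finset.sum_eq_zero fun i hi => ?_
  have hiq : i ≤ M.q := (Finset.mem_Icc.mp hi).2
  rw [hf (n + i) (by lia), mul_zero]

theorem app_eq_top_mul (hf : ∀ k < n + M.q, f k = 0) : M.app f n = M.b M.q n * f (n + M.q) := by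
  refine Finset.sum_eq_single_of_mem M.q (Finset.right_mem_Icc.mpr M.hpq) fun i hi hne => ?_
  have hiq : i < M.q := lt_of_le_of_ne (Finset.mem_Icc.mp hi).2 hne
  rw [hf (n + i) (by lia), mul_zero]

theorem app_app_eq_zero_of_add_lt (hf : ∀ k < m, f k = 0) (hn : n + M.q + N.q < m) :
    M.app (N.app f) n = 0 :=
  M.app_eq_zero_of_add_lt (m := m - N.q)
    (fun _ hk => N.app_eq_zero_of_add_lt hf (lt_sub_iff_add_lt.mp hk)) (lt_sub_iff_add_lt.mpr hn)

theorem app_app_eq_top_mul_top_mul (hf : ∀ k < n + M.q + N.q, f k = 0) :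
    M.app (N.app f) n = M.b M.q n * N.b N.q (n + M.q) * f (n + M.q + N.q) := by
  have hNf : ∀ k < n + M.q, N.app f k = 0 := fun k hk =>
    N.app_eq_zero_of_add_lt hf (add_lt_add_left hk N.q)
  rw [M.app_eq_top_mul hNf, N.app_eq_top_mul hf, mul_assoc]

theorem app_app_single_top :
    M.app (N.app (Pi.single (n + M.q + N.q) 1)) n = M.b M.q n * N.b N.q (n + M.q) := by
  rw [M.app_app_eq_top_mul_top_mul N fun k hk => Pi.single_eq_of_ne hk.ne 1, Pi.single_eq_same,
    mul_one]

end TopCoefficient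

section EqualCompositions

variable {A B C D : DiffOp}

theorem q_add_q_le_of_comp_eq (h : ∀ f, A.app (B.app f) = C.app (D.app f)) {n : ℤ}
    (hA : A.b A.q n ≠ 0) (hB : B.b B.q (n + A.q) ≠ 0) : A.q + B.q ≤ C.q + D.q := by
  by_contra! hlt
  have hzero : C.app (D.app (Pi.single (n + A.q + B.q) 1)) n = 0 :=
    C.app_app_eq_zero_of_add_lt D (fun k hk => Pi.single_eq_of_ne hk.ne 1) (by lia)
  rw [← h, app_app_single_top] at hzero
  exact mul_ne_zero hA hB hzero

theorem top_mul_top_eq_of_comp_eq (h : ∀ f, A.app (B.app f) = C.app (D.app f))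
    (hq : A.q + B.q = C.q + D.q) (n : ℤ) :
    A.b A.q n * B.b B.q (n + A.q) = C.b C.q n * D.b D.q (n + C.q) := by
  rw [← app_app_single_top, ← app_app_single_top, h, add_assoc, hq, ← add_assoc]

end EqualCompositions

section Reflection

variable {M : DiffOp}

theorem reflect_app (f : ℤ → ℂ) (n : ℤ) :
    M.reflect.app f n = M.app (fun k => f (-k)) (-n) :=
  Finset.sum_equiv (Equiv.neg ℤ)
    (fun i => by simp only [reflect, Finset.mem_Icc, Equiv.neg_apply]; lia)
    (fun i _ => by simp only [reflect, Equiv.neg_apply, neg_add, neg_neg])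

theorem regular_iff_upperRegular_and_reflect :
    M.Regular ↔ M.UpperRegular ∧ M.reflect.UpperRegular := by
  have hlower : M.reflect.UpperRegular ↔ ∀ n, M.b M.p n ≠ 0 := by
    simp only [UpperRegular, reflect, neg_neg]
    exact Iff.symm neg_surjective.forall
  rw [hlower, Regular, UpperRegular, forall_and, and_comm]

end Reflection

namespace Intertwines

variable {P L₀ L : DiffOp}

theorem reflect (h : Intertwines P L₀ L) : Intertwines P.reflect L₀.reflect L.reflect := by
  intro f
  funext n
  simp only [reflect_app, neg_neg]
  exact congrFun (h fun k => f (-k)) (-n)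

theorem q_eq (h : Intertwines P L₀ L) (hP : P.UpperRegular) : L.q = L₀.q := by
  obtain ⟨n, hn⟩ := L.hq
  obtain ⟨n₀, hn₀⟩ := L₀.hq
  have hle : L.q + P.q ≤ P.q + L₀.q := q_add_q_le_of_comp_eq h hn (hP _)
  have hge : P.q + L₀.q ≤ L.q + P.q :=
    q_add_q_le_of_comp_eq (fun f => (h f).symm) (hP (n₀ - P.q)) (by rwa [sub_add_cancel])
  lia

theorem top_ne_zero_iff (h : Intertwines P L₀ L) (hP : P.UpperRegular) (n : ℤ) :
    L.b L.q n ≠ 0 ↔ L₀.b L₀.q (n + P.q) ≠ 0 := by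
  have htop : L.b L.q n * P.b P.q (n + L.q) = P.b P.q n * L₀.b L₀.q (n + P.q) :=
    top_mul_top_eq_of_comp_eq h (by rw [h.q_eq hP, add_comm]) n
  rw [← mul_ne_zero_iff_right (hP (n + L.q)), htop, mul_ne_zero_iff_left (hP n)]

theorem upperRegular_iff (h : Intertwines P L₀ L) (hP : P.UpperRegular) :
    L.UpperRegular ↔ L₀.UpperRegular := by
  simp only [UpperRegular, h.top_ne_zero_iff hP]
  exact Iff.symm (add_right_surjective P.q).forall

end Intertwines

end DiffOp

/-- If `P` is regular and `L ∘ P = P ∘ L₀`, then `L` has the same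
support as `L₀`, and `L` is regular iff `L₀` is. -/
theorem stmt9 (P L₀ L : DiffOp) (hreg : P.Regular)
    (hL : ∀ f : ℤ → ℂ, L.app (P.app f) = P.app (L₀.app f)) :
    L.p = L₀.p ∧ L.q = L₀.q ∧ (L.Regular ↔ L₀.Regular) := by
  have h : DiffOp.Intertwines P L₀ L := hL
  obtain ⟨hupper, hlower⟩ := DiffOp.regular_iff_upperRegular_and_reflect.mp hreg
  refine ⟨neg_injective (h.reflect.q_eq hlower), h.q_eq hupper, ?_⟩
  rw [DiffOp.regular_iff_upperRegular_and_reflect, DiffOp.regular_iff_upperRegular_and_reflect,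
    h.upperRegular_iff hupper, h.reflect.upperRegular_iff hlower]
end

section
/- Assume the parameters A, B, C, D are admissible, so the operator P is defined, and write a₀(n), b₀(n), c₀(n) for the three coefficients of L_{α,β;ε}, so that (L_{α,β;ε}f)(n) = a₀(n)f(n+1) + b₀(n)f(n) + c₀(n)f(n−1). Suppose a, b, c : ℤ → ℂ are such that the operator (Lf)(n) = a(n)f(n+1) + b(n)f(n) + c(n)f(n−1) satisfies L ∘ P = P ∘ L_{α,β;ε}. Then for all n ∈ ℤ: a(n) = a₀(n); b(n) = b₀(n) + a₀(n)·det_{−1}(n+1)/det(n+1) − a₀(n−1)·det_{−1}(n)/det(n); and c(n) = c₀(n−k−l)·det(n−1)·det(n+1)/det(n)². -/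
/-- The functions `f^{(i)}(n)` built from the parameters `A, B, C, D`. -/
noncomputable def ffun (α β ε : ℂ) (k : ℕ) (A B C D : ℕ → ℂ) (i : ℕ) (n : ℤ) : ℂ :=
  if i < k then
    ∑ r ∈ Finset.range (i + 1), (A r * phiPd α β ε (i - r) n + B r * psiPd α β ε (i - r) n)
  else
    ∑ r ∈ Finset.range (i - k + 1),
      (C r * phiMd α β ε (i - k - r) n + D r * psiMd α β ε (i - k - r) n)

/-- `det(n)`: the `(k+l)×(k+l)` determinant of `(f^{(i)}(n+j))`,
`0 ≤ i ≤ k+l-1`, `-(k+l) ≤ j ≤ -1`. -/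
noncomputable def detFun (α β ε : ℂ) (k l : ℕ) (A B C D : ℕ → ℂ) (n : ℤ) : ℂ :=
  (Matrix.of fun i j : Fin (k + l) =>
    ffun α β ε k A B C D (i : ℕ) (n - (k + l : ℕ) + (j : ℕ))).det

/-- `det_{-r}(n)`: the `(k+l)×(k+l)` determinant of `(f^{(i)}(n+j))` where `j` runs
over `{-(k+l),…,0} ∖ {-r}`. -/
noncomputable def detrFun (α β ε : ℂ) (k l : ℕ) (A B C D : ℕ → ℂ) (r : ℕ) (n : ℤ) : ℂ :=
  (Matrix.of fun i j : Fin (k + l) =>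
    ffun α β ε k A B C D (i : ℕ)
      (if (j : ℕ) < k + l - r then n - (k + l : ℕ) + (j : ℕ)
       else n - (k + l : ℕ) + (j : ℕ) + 1)).det

/-- The Darboux operator `P`:
`(Pf)(n) = ∑_{r=0}^{k+l} (−1)^r (det_{−r}(n)/det(n)) f(n−r)`. -/
noncomputable def Pop (α β ε : ℂ) (k l : ℕ) (A B C D : ℕ → ℂ) (f : ℤ → ℂ) (n : ℤ) : ℂ :=
  ∑ r ∈ Finset.range (k + l + 1),
    (-1 : ℂ) ^ r * (detrFun α β ε k l A B C D r n / detFun α β ε k l A B C D n) * f (n - r)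

/-- Coefficient of `f(n+1)` in the Jacobi operator. -/
noncomputable def a0 (α β ε : ℂ) (n : ℤ) : ℂ :=
  2 * ((n : ℂ) + ε + 1) * ((n : ℂ) + ε + α + β + 1) /
    ((2 * (n : ℂ) + 2 * ε + α + β + 1) * (2 * (n : ℂ) + 2 * ε + α + β + 2))

/-- Coefficient of `f(n)` in the Jacobi operator. -/
noncomputable def b0 (α β ε : ℂ) (n : ℤ) : ℂ :=
  (β ^ 2 - α ^ 2) / ((2 * (n : ℂ) + 2 * ε + α + β) * (2 * (n : ℂ) + 2 * ε + α + β + 2))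

/-- Coefficient of `f(n-1)` in the Jacobi operator. -/
noncomputable def c0 (α β ε : ℂ) (n : ℤ) : ℂ :=
  2 * ((n : ℂ) + ε + α) * ((n : ℂ) + ε + β) /
    ((2 * (n : ℂ) + 2 * ε + α + β) * (2 * (n : ℂ) + 2 * ε + α + β + 1))

/-!
Both sides of `L ∘ P = P ∘ L₀`, with `P` of order `N = k + l`, are difference operators with shifts
from `+1` to `-(N + 1)`, and such an operator determines its coefficients: evaluating at delta
functions reads them off. Writing `p r n` for the coefficient of `f (n - r)` in `(P f) n`, the
shifts `+1`, `0` and `-(N + 1)` give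
* `a n * p 0 (n + 1) = p 0 n * a₀ n`,
* `a n * p 1 (n + 1) + b n * p 0 n = p 1 n * a₀ (n - 1) + p 0 n * b₀ n`,
* `c n * p N (n - 1) = p N n * c₀ (n - N)`.

The formulas follow because the determinant with the last column omitted is `det n`, so that
`p 0 = 1`, and the one with the first column omitted is `det (n + 1)`.
-/

section DifferenceOperators

variable {R : Type*} [CommSemiring R]

/-- The three-term difference operator `(L f)(n) = a(n) f(n+1) + b(n) f(n) + c(n) f(n-1)`. -/
def threeTermOp (a b c : ℤ → R) : (ℤ → R) →ₗ[R] (ℤ → R) where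
  toFun f n := a n * f (n + 1) + b n * f n + c n * f (n - 1)
  map_add' f g := by ext n; simp only [Pi.add_apply]; ring
  map_smul' t f := by ext n; simp only [Pi.smul_apply, smul_eq_mul, RingHom.id_apply]; ring

/-- The backward difference operator `(P f)(n) = ∑_{r=0}^{N} p_r(n) f(n-r)` of order `N`. The
values `p r` for `r > N` are ignored. -/
def backwardOp (N : ℕ) (p : ℕ → ℤ → R) : (ℤ → R) →ₗ[R] (ℤ → R) where
  toFun f n := ∑ r ∈ Finset.range (N + 1), p r n * f (n - r)
  map_add' f g := by
    ext n
    simp only [Pi.add_apply, mul_add, Finset.sum_add_distrib]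
  map_smul' t f := by
    ext n
    simp only [Pi.smul_apply, smul_eq_mul, RingHom.id_apply, Finset.mul_sum, mul_left_comm]

theorem threeTermOp_apply (a b c f : ℤ → R) (n : ℤ) :
    threeTermOp a b c f n = a n * f (n + 1) + b n * f n + c n * f (n - 1) := rfl

theorem backwardOp_apply (N : ℕ) (p : ℕ → ℤ → R) (f : ℤ → R) (n : ℤ) :
    backwardOp N p f n = ∑ r ∈ Finset.range (N + 1), p r n * f (n - r) := rfl

theorem threeTermOp_single (a b c : ℤ → R) (m : ℤ) :
    threeTermOp a b c (Pi.single m 1) =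
      a (m - 1) • Pi.single (m - 1) 1 + b m • Pi.single m 1 + c (m + 1) • Pi.single (m + 1) 1 := by
  ext n
  have shift_up : n + 1 = m ↔ n = m - 1 := by lia
  have shift_down : n - 1 = m ↔ n = m + 1 := by lia
  simp only [threeTermOp_apply, Pi.add_apply, Pi.smul_apply, smul_eq_mul, Pi.single_apply,
    shift_up, shift_down]
  congr 1
  · congr 1 <;> split_ifs with h <;> simp [h]
  · split_ifs with h <;> simp [h]

variable {N : ℕ} {p : ℕ → ℤ → R}

theorem backwardOp_single_of_lt {m n : ℤ} (h : n < m) :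
    backwardOp N p (Pi.single m 1) n = 0 := by
  rw [backwardOp_apply]
  refine Finset.sum_eq_zero fun r _ => ?_
  rw [Pi.single_eq_of_ne (by lia), mul_zero]

theorem backwardOp_single_of_add_lt {m n : ℤ} (h : m + N < n) :
    backwardOp N p (Pi.single m 1) n = 0 := by
  rw [backwardOp_apply]
  refine Finset.sum_eq_zero fun r hr => ?_
  have : r < N + 1 := Finset.mem_range.1 hr
  rw [Pi.single_eq_of_ne (by lia), mul_zero]

theorem backwardOp_single_of_add_eq {m n : ℤ} {r : ℕ} (hr : r ≤ N) (h : m + r = n) :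
    backwardOp N p (Pi.single m 1) n = p r n := by
  rw [backwardOp_apply, Finset.sum_eq_single_of_mem r (Finset.mem_range.2 (by lia))]
  · rw [show n - r = m by lia, Pi.single_eq_same, mul_one]
  · intro s _ hs
    rw [Pi.single_eq_of_ne (by lia), mul_zero]

variable {a b c a₀ b₀ c₀ : ℤ → R}

theorem intertwining_single
    (h : threeTermOp a b c ∘ₗ backwardOp N p = backwardOp N p ∘ₗ threeTermOp a₀ b₀ c₀) (n m : ℤ) :
    a n * backwardOp N p (Pi.single m 1) (n + 1) + b n * backwardOp N p (Pi.single m 1) n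
        + c n * backwardOp N p (Pi.single m 1) (n - 1) =
      a₀ (m - 1) * backwardOp N p (Pi.single (m - 1) 1) n + b₀ m * backwardOp N p (Pi.single m 1) n
        + c₀ (m + 1) * backwardOp N p (Pi.single (m + 1) 1) n := by
  have h_single := congrFun (LinearMap.congr_fun h (Pi.single m 1)) n
  simpa only [LinearMap.comp_apply, threeTermOp_single, map_add, map_smul, Pi.add_apply,
    Pi.smul_apply, smul_eq_mul, threeTermOp_apply] using h_single

theorem intertwining_leadingCoeff
    (h : threeTermOp a b c ∘ₗ backwardOp N p = backwardOp N p ∘ₗ threeTermOp a₀ b₀ c₀) (n : ℤ) :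
    a n * p 0 (n + 1) = p 0 n * a₀ n := by
  have h_single := intertwining_single h n (n + 1)
  rw [backwardOp_single_of_add_eq (r := 0) (n := n + 1) (by lia) (by lia),
    backwardOp_single_of_lt (m := n + 1) (n := n) (by lia),
    backwardOp_single_of_lt (m := n + 1) (n := n - 1) (by lia),
    backwardOp_single_of_add_eq (m := n + 1 - 1) (r := 0) (by lia) (by lia),
    backwardOp_single_of_lt (m := n + 1 + 1) (by lia)] at h_single
  simpa [mul_comm] using h_single

theorem intertwining_coeff_zero (hN : 1 ≤ N)
    (h : threeTermOp a b c ∘ₗ backwardOp N p = backwardOp N p ∘ₗ threeTermOp a₀ b₀ c₀) (n : ℤ) :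
    a n * p 1 (n + 1) + b n * p 0 n = p 1 n * a₀ (n - 1) + p 0 n * b₀ n := by
  have h_single := intertwining_single h n n
  rw [backwardOp_single_of_add_eq (n := n + 1) hN (by lia),
    backwardOp_single_of_add_eq (m := n) (r := 0) (by lia) (by lia),
    backwardOp_single_of_lt (n := n - 1) (by lia),
    backwardOp_single_of_add_eq (m := n - 1) hN (by lia),
    backwardOp_single_of_lt (m := n + 1) (by lia)] at h_single
  simpa [mul_comm] using h_single

theorem intertwining_trailingCoeff
    (h : threeTermOp a b c ∘ₗ backwardOp N p = backwardOp N p ∘ₗ threeTermOp a₀ b₀ c₀) (n : ℤ) :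
    c n * p N (n - 1) = p N n * c₀ (n - N) := by
  have h_single := intertwining_single h n (n - N - 1)
  rw [backwardOp_single_of_add_lt (n := n + 1) (by lia),
    backwardOp_single_of_add_lt (m := n - N - 1) (n := n) (by lia),
    backwardOp_single_of_add_eq (n := n - 1) le_rfl (by lia),
    backwardOp_single_of_add_lt (m := n - N - 1 - 1) (by lia),
    backwardOp_single_of_add_eq (m := n - N - 1 + 1) le_rfl (by lia)] at h_single
  simpa [mul_comm] using h_single

end DifferenceOperators

section Casoratian

variable {R : Type*} [CommRing R] {N : ℕ}

/-- The Casoratian of `F₀, …, F_{N-1}`, with columns at the points `n - N, …, n - 1`; `det(n)` is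
the case `F i = f⁽ⁱ⁾`. -/
def casoratian (F : Fin N → ℤ → R) (n : ℤ) : R :=
  (Matrix.of fun i j : Fin N => F i (n - N + (j : ℕ))).det

/-- The determinant of `(F i)` with columns at the points `n - N, …, n` except `n - r`, meant for
`r ≤ N`; `det_{-r}(n)` is the case `F i = f⁽ⁱ⁾`. -/
def casoratianOmit (F : Fin N → ℤ → R) (r : ℕ) (n : ℤ) : R :=
  (Matrix.of fun i j : Fin N =>
    F i (if (j : ℕ) < N - r then n - N + (j : ℕ) else n - N + (j : ℕ) + 1)).det

theorem casoratianOmit_zero (F : Fin N → ℤ → R) (n : ℤ) :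
    casoratianOmit F 0 n = casoratian F n := by
  simp only [casoratianOmit, casoratian, Nat.sub_zero, Fin.is_lt, if_true]

theorem casoratianOmit_order (F : Fin N → ℤ → R) (n : ℤ) :
    casoratianOmit F N n = casoratian F (n + 1) := by
  simp only [casoratianOmit, casoratian, Nat.sub_self, Nat.not_lt_zero, if_false]
  simp only [sub_add_eq_add_sub, add_right_comm]

end Casoratian

section Darboux

variable {K : Type*} [Field K] {N : ℕ}

/-- The coefficient `(-1)^r det_{-r}(n) / det(n)` of `f(n-r)` in the Darboux operator of `F`. -/
def darbouxCoeff (F : Fin N → ℤ → K) (r : ℕ) (n : ℤ) : K :=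
  (-1) ^ r * (casoratianOmit F r n / casoratian F n)

/-- The Darboux operator of `F₀, …, F_{N-1}`: the monic backward difference operator of order `N`
annihilating every `F i`, written through Casoratians. It is meant for a nowhere vanishing
`casoratian F`, as division by `0` gives `0`; `P` is the case `F i = f⁽ⁱ⁾`. -/
def darbouxOp (F : Fin N → ℤ → K) : (ℤ → K) →ₗ[K] (ℤ → K) :=
  backwardOp N (darbouxCoeff F)

theorem darbouxCoeff_zero {F : Fin N → ℤ → K} {n : ℤ} (h : casoratian F n ≠ 0) :
    darbouxCoeff F 0 n = 1 := by
  rw [darbouxCoeff, casoratianOmit_zero, div_self h, pow_zero, mul_one]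

theorem darbouxCoeff_one (F : Fin N → ℤ → K) (n : ℤ) :
    darbouxCoeff F 1 n = -(casoratianOmit F 1 n / casoratian F n) := by
  rw [darbouxCoeff, pow_one, neg_one_mul]

theorem darbouxCoeff_order (F : Fin N → ℤ → K) (n : ℤ) :
    darbouxCoeff F N n = (-1) ^ N * (casoratian F (n + 1) / casoratian F n) := by
  rw [darbouxCoeff, casoratianOmit_order]

theorem stmt10_general (hN : 1 ≤ N) (F : Fin N → ℤ → K) (hF : ∀ n, casoratian F n ≠ 0)
    {a b c a₀ b₀ c₀ : ℤ → K}
    (h : threeTermOp a b c ∘ₗ darbouxOp F = darbouxOp F ∘ₗ threeTermOp a₀ b₀ c₀) (n : ℤ) :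
    a n = a₀ n ∧
    b n = b₀ n + a₀ n * casoratianOmit F 1 (n + 1) / casoratian F (n + 1)
      - a₀ (n - 1) * casoratianOmit F 1 n / casoratian F n ∧
    c n = c₀ (n - N) * casoratian F (n - 1) * casoratian F (n + 1) / casoratian F n ^ 2 := by
  have ha : a n = a₀ n := by
    simpa only [darbouxCoeff_zero (hF _), mul_one, one_mul] using intertwining_leadingCoeff h n
  refine ⟨ha, ?_, ?_⟩
  · have hb := intertwining_coeff_zero hN h n
    rw [darbouxCoeff_zero (hF n), darbouxCoeff_one, darbouxCoeff_one, ha] at hb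
    linear_combination hb
  · have hc := intertwining_trailingCoeff h n
    rw [darbouxCoeff_order, darbouxCoeff_order, sub_add_cancel] at hc
    have h_prev := hF (n - 1)
    have h_here := hF n
    field_simp at hc ⊢
    linear_combination hc

end Darboux

/-- Explicit formulas for the coefficients of the Darboux-transformed
operator `L` with `L ∘ P = P ∘ L_{α,β;ε}`. -/
theorem stmt10 (α β ε : ℂ) (hgood : GoodParams α β ε) (k l : ℕ) (hkl : 1 ≤ k + l)
    (hkα : 0 < k → ∀ m : ℤ, -(k : ℤ) + 1 ≤ m → m ≤ (k : ℤ) - 1 → α ≠ (m : ℂ))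
    (hlβ : 0 < l → ∀ m : ℤ, -(l : ℤ) + 1 ≤ m → m ≤ (l : ℤ) - 1 → β ≠ (m : ℂ))
    (A B C D : ℕ → ℂ)
    (hadm : ∀ n : ℤ, detFun α β ε k l A B C D n ≠ 0)
    (a b c : ℤ → ℂ)
    (hL : ∀ (f : ℤ → ℂ) (n : ℤ),
      a n * Pop α β ε k l A B C D f (n + 1) + b n * Pop α β ε k l A B C D f n
        + c n * Pop α β ε k l A B C D f (n - 1)
      = Pop α β ε k l A B C D (jacobiL α β ε f) n) :
    ∀ n : ℤ,
      a n = a0 α β ε n ∧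
      b n = b0 α β ε n
        + a0 α β ε n * detrFun α β ε k l A B C D 1 (n + 1) / detFun α β ε k l A B C D (n + 1)
        - a0 α β ε (n - 1) * detrFun α β ε k l A B C D 1 n / detFun α β ε k l A B C D n ∧
      c n = c0 α β ε (n - (k + l : ℕ)) * detFun α β ε k l A B C D (n - 1)
        * detFun α β ε k l A B C D (n + 1) / (detFun α β ε k l A B C D n) ^ 2 :=
  stmt10_general hkl (fun i => ffun α β ε k A B C D i) hadm
    (LinearMap.ext fun f => funext fun n => hL f n)
end

section
/- As identities of linear operators on functions ℤ → ℂ: if α ≠ 0 then L_{α,β;ε} − Id = D₊^{α−1} ∘ D₋^{α}; if α ≠ −1 then L_{α,β;ε} − Id = D₋^{α+1} ∘ D₊^{α}; and, with no further restriction, L_{α,β;ε} + Id = D₊^{β−1} ∘ D₋^{β} = D₋^{β+1} ∘ D₊^{β}. -/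
/-- The operator `D₋^{α}`. -/
noncomputable def Dma (α β ε : ℂ) (f : ℤ → ℂ) (n : ℤ) : ℂ :=
  ((ε + α) / α) * ((((n : ℂ) + ε + α + β) / (2 * (n : ℂ) + 2 * ε + α + β)) * f n
    - (((n : ℂ) + ε + β) / (2 * (n : ℂ) + 2 * ε + α + β)) * f (n - 1))

/-- The operator `D₊^{α}`. -/
noncomputable def Dpa (α β ε : ℂ) (f : ℤ → ℂ) (n : ℤ) : ℂ :=
  ((α + 1) / (ε + α + 1)) *
    ((2 * ((n : ℂ) + ε + 1) / (2 * (n : ℂ) + 2 * ε + α + β + 2)) * f (n + 1)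
      - (2 * ((n : ℂ) + ε + α + 1) / (2 * (n : ℂ) + 2 * ε + α + β + 2)) * f n)

/-- The operator `D₋^{β}`. -/
noncomputable def Dmb (α β ε : ℂ) (f : ℤ → ℂ) (n : ℤ) : ℂ :=
  (((n : ℂ) + ε + α + β) / (2 * (n : ℂ) + 2 * ε + α + β)) * f n
    + (((n : ℂ) + ε + α) / (2 * (n : ℂ) + 2 * ε + α + β)) * f (n - 1)

/-- The operator `D₊^{β}`. -/
noncomputable def Dpb (α β ε : ℂ) (f : ℤ → ℂ) (n : ℤ) : ℂ :=
  (2 * ((n : ℂ) + ε + 1) / (2 * (n : ℂ) + 2 * ε + α + β + 2)) * f (n + 1)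
    + (2 * ((n : ℂ) + ε + β + 1) / (2 * (n : ℂ) + 2 * ε + α + β + 2)) * f n

/-!
Up to normalizing constants that cancel in the compositions, `D₊^{α}` and `D₋^{α}` are two-term
operators, so each factorization of `L - 1` is a comparison of three coefficients. The outer two
agree on sight, and the middle one is a partial fraction identity in `x = n + ε`; the identities for
the two orders of composition are exchanged by `(x, α) ↦ (x + α, -α)`. Conjugation by `(-1)ⁿ` turns
`L_{α,β;ε}` into `-L_{β,α;ε}`, which carries the factorizations of `L - 1` to those of `L + 1`.
-/

/-- `D₋^{α}` without its normalizing constant `(ε + α) / α`. -/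
noncomputable def jacobiLower (α β ε : ℂ) (f : ℤ → ℂ) (n : ℤ) : ℂ :=
  (n + ε + α + β) / (2 * n + 2 * ε + α + β) * f n
    - (n + ε + β) / (2 * n + 2 * ε + α + β) * f (n - 1)

/-- `D₊^{α}` without its normalizing constant `(α + 1) / (ε + α + 1)`. -/
noncomputable def jacobiRaise (α β ε : ℂ) (f : ℤ → ℂ) (n : ℤ) : ℂ :=
  2 * (n + ε + 1) / (2 * n + 2 * ε + α + β + 2) * f (n + 1)
    - 2 * (n + ε + α + 1) / (2 * n + 2 * ε + α + β + 2) * f n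

/-- The sequence `n ↦ (-1)ⁿ`, by which operators on functions `ℤ → ℂ` are conjugated to exchange
the roles of `α` and `β`. -/
noncomputable def altSign (n : ℤ) : ℂ := (-1) ^ n

section Factorization

theorem jacobi_diag_sub_one_raise_lower {K : Type*} [Field K] {x α β : K} (h₀ : 2 * x + α + β ≠ 0)
    (h₁ : 2 * x + α + β + 1 ≠ 0) (h₂ : 2 * x + α + β + 2 ≠ 0) :
    (β ^ 2 - α ^ 2) / ((2 * x + α + β) * (2 * x + α + β + 2)) - 1 =
      -(2 * (x + 1) * (x + β + 1) / ((2 * x + α + β + 1) * (2 * x + α + β + 2))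
        + 2 * (x + α) * (x + α + β) / ((2 * x + α + β) * (2 * x + α + β + 1))) := by
  field_simp
  ring

theorem jacobi_diag_sub_one_lower_raise {K : Type*} [Field K] {x α β : K} (h₀ : 2 * x + α + β ≠ 0)
    (h₁ : 2 * x + α + β + 1 ≠ 0) (h₂ : 2 * x + α + β + 2 ≠ 0) :
    (β ^ 2 - α ^ 2) / ((2 * x + α + β) * (2 * x + α + β + 2)) - 1 =
      -(2 * (x + α + 1) * (x + α + β + 1) / ((2 * x + α + β + 1) * (2 * x + α + β + 2))
        + 2 * x * (x + β) / ((2 * x + α + β) * (2 * x + α + β + 1))) := by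
  have reflect : 2 * (x + α) + -α + β = 2 * x + α + β := by ring
  have h := jacobi_diag_sub_one_raise_lower (x := x + α) (α := -α) (β := β)
  simp only [reflect, neg_sq, add_neg_cancel_right] at h
  exact h h₀ h₁ h₂

variable {α β ε : ℂ}

theorem two_mul_add_ne_zero (hs : ∀ m : ℤ, 2 * ε + α + β ≠ m) (n k : ℤ) :
    2 * (n + ε) + α + β + k ≠ 0 := fun h ↦
  hs (-(2 * n) - k) (by push_cast; linear_combination h)

theorem jacobiRaise_jacobiLower (hs : ∀ m : ℤ, 2 * ε + α + β ≠ m) (f : ℤ → ℂ) :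
    jacobiRaise (α - 1) β ε (jacobiLower α β ε f) = jacobiL α β ε f - f := by
  funext n
  have diag := jacobi_diag_sub_one_raise_lower (by simpa using two_mul_add_ne_zero hs n 0)
    (by simpa using two_mul_add_ne_zero hs n 1) (by simpa using two_mul_add_ne_zero hs n 2)
  simp only [jacobiL, jacobiRaise, jacobiLower, Pi.sub_apply, Int.cast_add, Int.cast_one,
    add_sub_cancel_right, div_eq_mul_inv, mul_inv] at diag ⊢
  linear_combination -f n * diag

theorem jacobiLower_jacobiRaise (hs : ∀ m : ℤ, 2 * ε + α + β ≠ m) (f : ℤ → ℂ) :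
    jacobiLower (α + 1) β ε (jacobiRaise α β ε f) = jacobiL α β ε f - f := by
  funext n
  have diag := jacobi_diag_sub_one_lower_raise (by simpa using two_mul_add_ne_zero hs n 0)
    (by simpa using two_mul_add_ne_zero hs n 1) (by simpa using two_mul_add_ne_zero hs n 2)
  simp only [jacobiL, jacobiRaise, jacobiLower, Pi.sub_apply, Int.cast_sub, Int.cast_one,
    sub_add_cancel, div_eq_mul_inv, mul_inv] at diag ⊢
  linear_combination -f n * diag

end Factorization

section Normalization

variable (α β ε c : ℂ) (f : ℤ → ℂ)

theorem jacobiLower_smul : jacobiLower α β ε (c • f) = c • jacobiLower α β ε f := by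
  funext n
  simp only [jacobiLower, Pi.smul_apply, smul_eq_mul]
  ring

theorem jacobiRaise_smul : jacobiRaise α β ε (c • f) = c • jacobiRaise α β ε f := by
  funext n
  simp only [jacobiRaise, Pi.smul_apply, smul_eq_mul]
  ring

theorem Dma_eq_smul_jacobiLower : Dma α β ε f = ((ε + α) / α) • jacobiLower α β ε f := rfl

theorem Dpa_eq_smul_jacobiRaise :
    Dpa α β ε f = ((α + 1) / (ε + α + 1)) • jacobiRaise α β ε f := rfl

variable {α ε}

theorem Dpa_Dma_eq_jacobiRaise_jacobiLower (hα : α ≠ 0) (hεα : ε + α ≠ 0) :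
    Dpa (α - 1) β ε (Dma α β ε f) = jacobiRaise (α - 1) β ε (jacobiLower α β ε f) := by
  have cancel : (α - 1 + 1) / (ε + (α - 1) + 1) * ((ε + α) / α) = 1 := by
    rw [add_assoc ε, sub_add_cancel, div_mul_div_cancel₀ hεα, div_self hα]
  rw [Dpa_eq_smul_jacobiRaise, Dma_eq_smul_jacobiLower, jacobiRaise_smul, smul_smul, cancel,
    one_smul]

theorem Dma_Dpa_eq_jacobiLower_jacobiRaise (hα : α + 1 ≠ 0) (hεα : ε + α + 1 ≠ 0) :
    Dma (α + 1) β ε (Dpa α β ε f) = jacobiLower (α + 1) β ε (jacobiRaise α β ε f) := by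
  have cancel : (ε + (α + 1)) / (α + 1) * ((α + 1) / (ε + α + 1)) = 1 := by
    rw [← add_assoc, div_mul_div_cancel₀ hα, div_self hεα]
  rw [Dpa_eq_smul_jacobiRaise, Dma_eq_smul_jacobiLower, jacobiLower_smul, smul_smul, cancel,
    one_smul]

end Normalization

section Parity

theorem altSign_mul_self : altSign * altSign = 1 := by
  funext n
  simp [altSign, ← mul_zpow]

theorem exists_eq_altSign_mul (f : ℤ → ℂ) : ∃ g, f = altSign * g :=
  ⟨altSign * f, by rw [← mul_assoc, altSign_mul_self, one_mul]⟩

theorem altSign_add_one (n : ℤ) : altSign (n + 1) = -altSign n := by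
  simp [altSign, zpow_add_one₀]

theorem altSign_sub_one (n : ℤ) : altSign (n - 1) = -altSign n := by
  simp [altSign, zpow_sub_one₀]

variable (α β ε : ℂ) (f : ℤ → ℂ)

theorem jacobiL_altSign_mul : jacobiL α β ε (altSign * f) = -(altSign * jacobiL β α ε f) := by
  funext n
  simp only [jacobiL, Pi.mul_apply, Pi.neg_apply, altSign_add_one, altSign_sub_one]
  ring

theorem Dmb_altSign_mul : Dmb α β ε (altSign * f) = altSign * jacobiLower β α ε f := by
  funext n
  simp only [Dmb, jacobiLower, Pi.mul_apply, altSign_sub_one]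
  ring

theorem Dpb_altSign_mul : Dpb α β ε (altSign * f) = -(altSign * jacobiRaise β α ε f) := by
  funext n
  simp only [Dpb, jacobiRaise, Pi.mul_apply, Pi.neg_apply, altSign_add_one]
  ring

variable {α β ε}

theorem jacobiL_add_self_eq_Dpb_Dmb (hs : ∀ m : ℤ, 2 * ε + α + β ≠ m) :
    jacobiL α β ε f + f = Dpb α (β - 1) ε (Dmb α β ε f) := by
  obtain ⟨g, rfl⟩ := exists_eq_altSign_mul f
  rw [Dmb_altSign_mul, Dpb_altSign_mul,
    jacobiRaise_jacobiLower (by simpa only [add_right_comm] using hs), jacobiL_altSign_mul]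
  ring

theorem jacobiL_add_self_eq_Dmb_Dpb (hs : ∀ m : ℤ, 2 * ε + α + β ≠ m) :
    jacobiL α β ε f + f = Dmb α (β + 1) ε (Dpb α β ε f) := by
  obtain ⟨g, rfl⟩ := exists_eq_altSign_mul f
  rw [Dpb_altSign_mul, ← mul_neg, Dmb_altSign_mul, ← neg_one_smul ℂ, jacobiLower_smul,
    jacobiLower_jacobiRaise (by simpa only [add_right_comm] using hs), jacobiL_altSign_mul,
    neg_one_smul]
  ring

end Parity

theorem stmt12_general (α β ε : ℂ) (hs : ∀ m : ℤ, 2 * ε + α + β ≠ m) :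
    (α ≠ 0 → ε + α ≠ 0 → ∀ (f : ℤ → ℂ) (n : ℤ),
      jacobiL α β ε f n - f n = Dpa (α - 1) β ε (Dma α β ε f) n) ∧
    (α ≠ -1 → ε + α ≠ -1 → ∀ (f : ℤ → ℂ) (n : ℤ),
      jacobiL α β ε f n - f n = Dma (α + 1) β ε (Dpa α β ε f) n) ∧
    (∀ (f : ℤ → ℂ) (n : ℤ),
      jacobiL α β ε f n + f n = Dpb α (β - 1) ε (Dmb α β ε f) n) ∧
    (∀ (f : ℤ → ℂ) (n : ℤ),
      jacobiL α β ε f n + f n = Dmb α (β + 1) ε (Dpb α β ε f) n) := by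
  refine ⟨fun hα hεα f n ↦ ?_, fun hα hεα f n ↦ ?_,
    fun f ↦ congrFun (jacobiL_add_self_eq_Dpb_Dmb f hs),
    fun f ↦ congrFun (jacobiL_add_self_eq_Dmb_Dpb f hs)⟩
  · rw [Dpa_Dma_eq_jacobiRaise_jacobiLower β f hα hεα, jacobiRaise_jacobiLower hs, Pi.sub_apply]
  · rw [Dma_Dpa_eq_jacobiLower_jacobiRaise β f (mt eq_neg_of_add_eq_zero_left hα)
      (mt eq_neg_of_add_eq_zero_left hεα), jacobiLower_jacobiRaise hs, Pi.sub_apply]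

/-- The factorizations
`L_{α,β;ε} − 1 = D₊^{α−1} ∘ D₋^{α} = D₋^{α+1} ∘ D₊^{α}` and
`L_{α,β;ε} + 1 = D₊^{β−1} ∘ D₋^{β} = D₋^{β+1} ∘ D₊^{β}`. -/
theorem stmt12 (α β ε : ℂ) (hgood : GoodParams α β ε) :
    (α ≠ 0 → ∀ (f : ℤ → ℂ) (n : ℤ),
      jacobiL α β ε f n - f n = Dpa (α - 1) β ε (Dma α β ε f) n) ∧
    (α ≠ -1 → ∀ (f : ℤ → ℂ) (n : ℤ),
      jacobiL α β ε f n - f n = Dma (α + 1) β ε (Dpa α β ε f) n) ∧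
    (∀ (f : ℤ → ℂ) (n : ℤ),
      jacobiL α β ε f n + f n = Dpb α (β - 1) ε (Dmb α β ε f) n) ∧
    (∀ (f : ℤ → ℂ) (n : ℤ),
      jacobiL α β ε f n + f n = Dmb α (β + 1) ε (Dpb α β ε f) n) := by
  obtain ⟨hpa, hma, hb⟩ := stmt12_general α β ε fun m ↦ (hgood m).2.2.2.2
  exact ⟨fun hα ↦ hpa hα (by simpa using (hgood 0).2.1),
    fun hα ↦ hma hα (by simpa using (hgood (-1)).2.1), hb⟩
end
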